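/- Small-drift propagation of lower bounds: Let α > 0 and r > 0, and set Q := B_r(0) × (−r², (α−1)r²). There exist positive constants s₁ and C₁ depending only on n and ν, and a positive constant k depending only on n, ν and α, with the following property. If u ∈ C^{2,1} on an open set containing the closure of Q satisfies −u_t + Lu ≤ 0 and u > 0 at every point of Q, if u ≥ ℓ on B_{r/2}(0) × {−r²} for some ℓ > 0, and if the drift satisfies ∫_{B_r(0)} (ess sup_{t∈(−r²,(α−1)r²)} |b(x,t)|)ⁿ dx ≤ s₁, then u ≥ C₁ · 2^{−k} · ℓ on B_{r/2}(0) × {(α−1)r²}. -/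

import Mathlib

open MeasureTheory ENNReal Metric Set RealInnerProductSpace

noncomputable section

/-- `n`-dimensional Euclidean space. -/
abbrev En (n : ℕ) : Type := EuclideanSpace ℝ (Fin n)

variable {n : ℕ}

/-- Time derivative `u_t`. -/
def Dt (u : En n × ℝ → ℝ) (X : En n × ℝ) : ℝ :=
  deriv (fun t => u (X.1, t)) X.2

/-- First spatial derivative `D_i u`. -/
def Dx (u : En n × ℝ → ℝ) (i : Fin n) (X : En n × ℝ) : ℝ :=
  fderiv ℝ (fun x => u (x, X.2)) X.1 (EuclideanSpace.single i 1)

/-- Second spatial derivative `D_{ij} u`. -/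
def Dxx (u : En n × ℝ → ℝ) (i j : Fin n) (X : En n × ℝ) : ℝ :=
  Dx (Dx u j) i X

/-- `u` is of class `C^{2,1}` on `Q`: `u`, `D_i u`, `D_{ij} u`, `u_t` exist and are
continuous on `Q`. -/
structure IsC21 (u : En n × ℝ → ℝ) (Q : Set (En n × ℝ)) : Prop where
  cont : ContinuousOn u Q
  diff_t : ∀ X ∈ Q, DifferentiableAt ℝ (fun t => u (X.1, t)) X.2
  diff_x : ∀ X ∈ Q, DifferentiableAt ℝ (fun x => u (x, X.2)) X.1
  diff_xx : ∀ j : Fin n, ∀ X ∈ Q, DifferentiableAt ℝ (fun x => Dx u j (x, X.2)) X.1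
  cont_t : ContinuousOn (Dt u) Q
  cont_x : ∀ i, ContinuousOn (Dx u i) Q
  cont_xx : ∀ i j, ContinuousOn (Dxx u i j) Q

/-- Uniform parabolicity with constant `ν` on `Q`:
`ν⁻¹|ξ|² ≤ Σ a_ij ξ_i ξ_j` and `Σ a_ij² ≤ ν²`. -/
def UnifParabolic (ν : ℝ) (a : En n × ℝ → Matrix (Fin n) (Fin n) ℝ)
    (Q : Set (En n × ℝ)) : Prop :=
  ∀ X ∈ Q, (∀ ξ : Fin n → ℝ, ν⁻¹ * (∑ i, ξ i ^ 2) ≤ ∑ i, ∑ j, a X i j * ξ i * ξ j) ∧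
    (∑ i, ∑ j, (a X i j) ^ 2) ≤ ν ^ 2

/-- `Lu = Σ_{ij} a_ij D_ij u + Σ_i b_i D_i u`. -/
def Lop (a : En n × ℝ → Matrix (Fin n) (Fin n) ℝ) (b : En n × ℝ → En n)
    (u : En n × ℝ → ℝ) (X : En n × ℝ) : ℝ :=
  (∑ i, ∑ j, a X i j * Dxx u i j X) + ∑ i, b X i * Dx u i X

/-- `∫ (ess sup_t |f(x,t)|)ⁿ dx`, the `n`-th power of the `L^n_x L^∞_t` norm of `f`
over the set `Q ⊆ ℝⁿ × ℝ`. -/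
def LxnLtinfPow {E : Type*} [NNNorm E] (f : En n × ℝ → E) (Q : Set (En n × ℝ)) : ℝ≥0∞ :=
  ∫⁻ x, (essSup (fun t => (‖f (x, t)‖₊ : ℝ≥0∞)) (volume.restrict {t | (x, t) ∈ Q})) ^ n

/-- The `L^n_x L^∞_t` norm of `f` over `Q`. -/
def LxnLtinf {E : Type*} [NNNorm E] (f : En n × ℝ → E) (Q : Set (En n × ℝ)) : ℝ≥0∞ :=
  (LxnLtinfPow f Q) ^ (1 / (n : ℝ))

/-- The box `B_ρ(y) × (t₁, t₂)`. -/
def box (y : En n) (ρ t₁ t₂ : ℝ) : Set (En n × ℝ) := ball y ρ ×ˢ Ioo t₁ t₂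

/-- The standard parabolic cylinder `Q_r(Y) = B_r(y) × (s - r², s)`. -/
def pcyl (Y : En n × ℝ) (r : ℝ) : Set (En n × ℝ) := box Y.1 r (Y.2 - r ^ 2) Y.2

/-- The slanted cylinder `V_r(Y) = {(x,t) : |x - (t/s)y| < r, 0 < t < s}`. -/
def slantCyl (Y : En n × ℝ) (r : ℝ) : Set (En n × ℝ) :=
  {X | ‖X.1 - (X.2 / Y.2) • Y.1‖ < r ∧ 0 < X.2 ∧ X.2 < Y.2}

/-- Supremum of the positive part `u₊` over a set `A`. -/
def supPos (u : En n × ℝ → ℝ) (A : Set (En n × ℝ)) : ℝ :=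
  sSup ((fun X => max (u X) 0) '' A)

/-- `Ω` is a Lipschitz domain with character `(rΩ, mΩ)`: at every boundary point `y`
there is a coordinate frame, encoded by the unit "vertical" direction `e`, in which
`Ω ∩ B_{rΩ}(y)` is the region above the graph of an `mΩ`-Lipschitz function `φ`
of the tangential variables. -/
def IsLipschitzDomain (Ω : Set (En n)) (rΩ mΩ : ℝ) : Prop :=
  0 < rΩ ∧ 0 ≤ mΩ ∧
  ∀ y ∈ frontier Ω, ∃ (e : En n) (φ : En n → ℝ),
    ‖e‖ = 1 ∧ LipschitzWith (Real.toNNReal mΩ) φ ∧ φ 0 = 0 ∧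
    (∀ x, x ∈ Ω ∩ ball y rΩ ↔
      dist x y < rΩ ∧ φ ((x - y) - ⟪x - y, e⟫ • e) < ⟪x - y, e⟫) ∧
    (∀ ρ : ℝ, 0 < ρ → ρ ≤ rΩ → y + ρ • e ∈ Ω)

/-!
On a cylinder of radius `3ρ` and height `ρ²`, compare `u` with a barrier `φ` that lies below `u` on
the parabolic boundary, is a subsolution for every uniformly elliptic coefficient matrix, and is
bounded below by a multiple of `ℓ` on `B_{2ρ}` at the final time. If `u` falls well below `φ` there,
then every slope of norm at most `m`, a multiple of `ℓ / ρ`, is the slope of a spatially affine,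
time-independent function touching `φ - u` from above at an interior point. At such a point the
Hessian of `φ - u` is nonpositive, and the equation bounds its trace by the drift times the slopes
involved. Contact points above the same `x` share their slope, so the area formula for the slope
map, bounded through its Lipschitz constants, needs only an integral over space, and
`c mⁿ ≤ C (ℓ / ρ)ⁿ ∫ (ess sup_t |b|)ⁿ dx`. For a small drift this is impossible, whatever `ρ` is.
Hence a lower bound passes from `B_ρ` to `B_{2ρ}` in time `ρ²` at the cost of a factor `γ(n, ν)`.
Every point of `B_{r/2}` lies in the double of a ball `B_ρ(y) ⊆ B_{r/2}`, so that the lower bound is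
propagated on `B_{r/2}` through about `36 α` time steps of length `ρ² ≤ r² / 36`.
-/

section

open Filter Topology NNReal Matrix

theorem tendsto_lintegral_add_pow {X : Type*} [MeasurableSpace X] {μ : Measure X} {S : Set X}
    {h : X → ℝ≥0} (hS : μ S ≠ ∞) (hh : Measurable h) {d : ℕ}
    (hint : ∫⁻ x in S, (h x : ℝ≥0∞) ^ d ∂μ ≠ ∞) :
    Tendsto (fun η : ℝ≥0 => ∫⁻ x in S, ((h x + η : ℝ≥0) : ℝ≥0∞) ^ d ∂μ) (𝓝[>] 0)
      (𝓝 (∫⁻ x in S, (h x : ℝ≥0∞) ^ d ∂μ)) := by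
  refine tendsto_lintegral_filter_of_dominated_convergence
    (fun x => 2 ^ (d - 1) * ((h x : ℝ≥0∞) ^ d + 1)) (.of_forall fun η => by fun_prop) ?_ ?_ ?_
  · filter_upwards [nhdsWithin_le_nhds (Iic_mem_nhds zero_lt_one)] with η hη
    refine .of_forall fun x => ?_
    have : (h x + η) ^ d ≤ 2 ^ (d - 1) * (h x ^ d + 1) := calc
      (h x + η) ^ d ≤ (h x + 1) ^ d := by gcongr; exact hη
      _ ≤ 2 ^ (d - 1) * (h x ^ d + 1 ^ d) := add_pow_le zero_le zero_le d
      _ = _ := by rw [one_pow]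
    exact_mod_cast this
  · rw [lintegral_const_mul _ (by fun_prop), lintegral_add_right _ measurable_const,
      setLIntegral_one]
    finiteness
  · refine .of_forall fun x => ?_
    have : Continuous fun η : ℝ≥0 => ((h x + η : ℝ≥0) : ℝ≥0∞) ^ d := by fun_prop
    simpa using (this.tendsto 0).mono_left nhdsWithin_le_nhds

section MeasureOfImages

variable {E : Type*} [NormedAddCommGroup E] [NormedSpace ℝ E] [FiniteDimensional ℝ E]
  [MeasurableSpace E] [BorelSpace E] {μ : Measure E} [μ.IsAddHaarMeasure]

theorem exists_addHaar_image_le_add {S : Set E} {f : E → E} {c : ℝ≥0}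
    (h : ∀ x ∈ S, ∀ᶠ y in 𝓝[S] x, dist (f y) (f x) ≤ c * dist y x) {ε : ℝ≥0∞} (hε : ε ≠ 0) :
    μ (f '' S) ≤ c ^ Module.finrank ℝ E * (μ S + ε) := by
  let radii (x : E) : Set ℝ := {r | 0 ≤ r ∧ ∀ y ∈ S, dist y x ≤ r → dist (f y) (f x) ≤ c * r}
  have radii_nonempty : ∀ x ∈ S, ∀ δ > 0, (radii x ∩ Ioo 0 δ).Nonempty := by
    intro x hx δ hδ
    obtain ⟨ε, hε, hεS⟩ := (nhdsWithin_basis_ball.eventually_iff).1 (h x hx)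
    refine ⟨min δ ε / 2, ⟨by positivity, fun y hy hyx => ?_⟩, by positivity, ?_⟩
    · have hyε : dist y x < ε := hyx.trans_lt (by linarith [min_le_right δ ε, lt_min hδ hε])
      exact (hεS ⟨hyε, hy⟩).trans (by gcongr)
    · linarith [min_le_left δ ε, lt_min hδ hε]
  obtain ⟨t, r, t_countable, -, hr, S_sub, hsum⟩ :=
    Besicovitch.exists_closedBall_covering_tsum_measure_le μ hε radii S radii_nonempty
  have image_sub : f '' S ⊆ ⋃ x ∈ t, closedBall (f x) (c * r x) := by
    rintro _ ⟨y, hy, rfl⟩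
    obtain ⟨x, hx, hyx⟩ := mem_iUnion₂.1 (S_sub hy)
    exact mem_iUnion₂.2 ⟨x, hx, (hr x hx).2 y hy hyx⟩
  have ball_eq (x : t) : μ (closedBall (f x) (c * r x)) =
      c ^ Module.finrank ℝ E * μ (closedBall (x : E) (r x)) := by
    have hrx := (hr x x.2).1
    rw [Measure.addHaar_closedBall _ _ (by positivity), Measure.addHaar_closedBall _ _ hrx,
      mul_pow, ENNReal.ofReal_mul (by positivity), mul_assoc, ENNReal.ofReal_pow c.coe_nonneg,
      ENNReal.ofReal_coe_nnreal]
  calc μ (f '' S) ≤ μ (⋃ x ∈ t, closedBall (f x) (c * r x)) := measure_mono image_sub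
    _ ≤ ∑' x : t, μ (closedBall (f x) (c * r x)) := measure_biUnion_le _ t_countable _
    _ = c ^ Module.finrank ℝ E * ∑' x : t, μ (closedBall (x : E) (r x)) := by
      simp_rw [ball_eq, ENNReal.tsum_mul_left]
    _ ≤ c ^ Module.finrank ℝ E * (μ S + ε) := by gcongr

theorem addHaar_image_le_of_eventually_dist_le {S : Set E} {f : E → E} {c : ℝ≥0}
    (h : ∀ x ∈ S, ∀ᶠ y in 𝓝[S] x, dist (f y) (f x) ≤ c * dist y x) :
    μ (f '' S) ≤ c ^ Module.finrank ℝ E * μ S := by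
  have hlim : Tendsto (fun ε => (c : ℝ≥0∞) ^ Module.finrank ℝ E * (μ S + ε)) (𝓝[>] 0)
      (𝓝 (c ^ Module.finrank ℝ E * (μ S + 0))) :=
    (ENNReal.Tendsto.const_mul (tendsto_const_nhds.add tendsto_id)
      (.inr (by finiteness))).mono_left nhdsWithin_le_nhds
  rw [add_zero] at hlim
  refine ge_of_tendsto hlim ?_
  filter_upwards [self_mem_nhdsWithin] with ε hε using exists_addHaar_image_le_add h hε.ne'

/-- `h` bounds the pointwise Lipschitz constant of `f` relative to `S`. -/
def LipschitzBoundOn (f : E → E) (h : E → ℝ≥0) (S : Set E) : Prop :=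
  ∀ x ∈ S, ∀ c > h x, ∀ᶠ y in 𝓝[S] x, dist (f y) (f x) ≤ c * dist y x

theorem addHaar_image_le_lintegral_add_pow {S : Set E} {f : E → E} {h : E → ℝ≥0}
    (hS : MeasurableSet S) (hh : Measurable h) (hf : LipschitzBoundOn f h S)
    {η : ℝ≥0} (hη : 0 < η) :
    μ (f '' S) ≤ ∫⁻ x in S, ((h x + η : ℝ≥0) : ℝ≥0∞) ^ Module.finrank ℝ E ∂μ := by
  let level (k : ℕ) : Set E := S ∩ {x | ⌊h x / η⌋₊ = k}
  have level_meas (k : ℕ) : MeasurableSet (level k) :=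
    hS.inter ((Nat.measurable_floor.comp (hh.div_const η)) (measurableSet_singleton k))
  have iUnion_level : ⋃ k, level k = S := by
    ext x; simp [level]
  have level_disjoint : Pairwise (Function.onFun Disjoint level) := fun i j hij =>
    Set.disjoint_left.2 fun x hi hj => hij (hi.2.symm.trans hj.2)
  have level_le (k : ℕ) : μ (f '' level k) ≤
      ∫⁻ x in level k, ((h x + η : ℝ≥0) : ℝ≥0∞) ^ Module.finrank ℝ E ∂μ := by
    have lt_of_mem : ∀ x ∈ level k, h x < (k + 1) * η := by
      rintro x ⟨-, rfl⟩
      exact (div_lt_iff₀ hη).1 (Nat.lt_floor_add_one _)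
    have le_of_mem : ∀ x ∈ level k, (k + 1) * η ≤ h x + η := by
      rintro x ⟨-, rfl⟩
      have := (le_div_iff₀ hη).1 (Nat.floor_le (zero_le (a := h x / η)))
      rw [add_mul, one_mul]
      gcongr
    calc μ (f '' level k)
        ≤ (((k + 1) * η : ℝ≥0) : ℝ≥0∞) ^ Module.finrank ℝ E * μ (level k) :=
          addHaar_image_le_of_eventually_dist_le fun x hx =>
            (hf x hx.1 _ (lt_of_mem x hx)).filter_mono (nhdsWithin_mono _ inter_subset_left)
      _ = ∫⁻ _ in level k, (((k + 1) * η : ℝ≥0) : ℝ≥0∞) ^ Module.finrank ℝ E ∂μ :=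
          (setLIntegral_const _ _).symm
      _ ≤ _ := setLIntegral_mono' (level_meas k) fun x hx => by
          gcongr; exact le_of_mem x hx
  calc μ (f '' S) = μ (⋃ k, f '' level k) := by rw [← image_iUnion, iUnion_level]
    _ ≤ ∑' k, μ (f '' level k) := measure_iUnion_le _
    _ ≤ ∑' k, ∫⁻ x in level k, ((h x + η : ℝ≥0) : ℝ≥0∞) ^ Module.finrank ℝ E ∂μ :=
        ENNReal.tsum_le_tsum level_le
    _ = _ := by rw [← lintegral_iUnion level_meas level_disjoint, iUnion_level]

theorem addHaar_image_le_lintegral_pow {S : Set E} {f : E → E} {h : E → ℝ≥0}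
    (hS : MeasurableSet S) (hS' : μ S ≠ ∞) (hh : Measurable h) (hf : LipschitzBoundOn f h S) :
    μ (f '' S) ≤ ∫⁻ x in S, (h x : ℝ≥0∞) ^ Module.finrank ℝ E ∂μ := by
  by_cases hint : ∫⁻ x in S, (h x : ℝ≥0∞) ^ Module.finrank ℝ E ∂μ = ∞
  · exact hint ▸ le_top
  refine ge_of_tendsto (tendsto_lintegral_add_pow hS' hh hint) ?_
  filter_upwards [self_mem_nhdsWithin] with η hη using
    addHaar_image_le_lintegral_add_pow hS hh hf hη

end MeasureOfImages

theorem exists_section_measurable_toNNReal {X T : Type*} [TopologicalSpace X] [T2Space X]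
    [MeasurableSpace X] [OpensMeasurableSpace X] [TopologicalSpace T]
    [Nonempty (X × T)] {K : Set (X × T)}
    (hK : IsCompact K) {τ : X × T → ℝ} (hτ : ContinuousOn τ K) :
    ∃ sec : X → X × T, (∀ x ∈ Prod.fst '' K, sec x ∈ K ∧ (sec x).1 = x) ∧
      Measurable ((Prod.fst '' K).indicator fun x => (τ (sec x)).toNNReal) := by
  have exists_max : ∀ x ∈ Prod.fst '' K, ∃ Z ∈ K ∩ Prod.fst ⁻¹' {x},
      ∀ Y ∈ K ∩ Prod.fst ⁻¹' {x}, τ Y ≤ τ Z := by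
    rintro _ ⟨Z, hZ, rfl⟩
    exact (hK.inter_right (isClosed_singleton.preimage continuous_fst)).exists_isMaxOn
      ⟨Z, hZ, rfl⟩ (hτ.mono inter_subset_left)
  choose! sec hsec hmax using exists_max
  refine ⟨sec, hsec, measurable_of_Ici fun c => ?_⟩
  have superlevel_eq (hc : 0 < c) : (Prod.fst '' K).indicator
      (fun x => (τ (sec x)).toNNReal) ⁻¹' Ici c = Prod.fst '' (K ∩ τ ⁻¹' Ici (c : ℝ)) := by
    ext x
    by_cases hx : x ∈ Prod.fst '' K
    · rw [mem_preimage, indicator_of_mem hx, mem_Ici, Real.le_toNNReal_iff_coe_le' hc]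
      constructor
      · exact fun h => ⟨sec x, ⟨(hsec x hx).1, h⟩, (hsec x hx).2⟩
      · rintro ⟨Y, ⟨hY, hcY⟩, rfl⟩
        exact le_trans hcY (hmax _ hx Y ⟨hY, rfl⟩)
    · rw [mem_preimage, indicator_of_notMem hx, mem_Ici]
      exact iff_of_false hc.not_ge fun h => hx (image_mono inter_subset_left h)
  rcases eq_zero_or_pos c with rfl | hc
  · simp
  · obtain ⟨F, hF, hKF⟩ := (continuousOn_iff_isClosed.1 hτ) (Ici (c : ℝ)) isClosed_Ici
    rw [superlevel_eq hc, inter_comm, hKF, inter_comm]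
    exact ((hK.inter_right hF).image continuous_fst).isClosed.measurableSet

section SecondOrder

variable {E : Type*} [NormedAddCommGroup E] [InnerProductSpace ℝ E]

theorem dist_le_of_affine_le {f : E → ℝ} {x y p q : E} {w c : ℝ} (hc : 0 ≤ c) (hxy : y ≠ x)
    (lower : ∀ z, dist z x ≤ 2 * dist y x → f x + ⟪p, z - x⟫ - c / 2 * ‖z - x‖ ^ 2 ≤ f z)
    (upper : ∀ z, dist z x ≤ 2 * dist y x → f z ≤ w + ⟪q, z - y⟫)
    (hw : w ≤ f x + ⟪p, y - x⟫) : dist p q ≤ 2 * c * dist y x := by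
  rcases eq_or_ne p q with rfl | hpq
  · simpa using by positivity
  have hr : 0 < dist y x := dist_pos.2 hxy
  have hpq' : 0 < ‖p - q‖ := norm_pos_iff.2 (sub_ne_zero.2 hpq)
  set e : E := (dist y x / ‖p - q‖) • (p - q) with he
  have norm_e : ‖e‖ = dist y x := by
    rw [he, norm_smul, norm_div, norm_norm, Real.norm_of_nonneg hr.le, div_mul_cancel₀ _ hpq'.ne']
  have inner_e : ⟪p - q, e⟫ = dist y x * ‖p - q‖ := by
    rw [he, inner_smul_right, real_inner_self_eq_norm_sq]
    field_simp
  have norm_add_e : ‖y + e - x‖ ≤ 2 * dist y x := by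
    calc ‖y + e - x‖ = ‖(y - x) + e‖ := by congr 1; abel
      _ ≤ ‖y - x‖ + ‖e‖ := norm_add_le _ _
      _ = 2 * dist y x := by rw [norm_e, dist_eq_norm]; ring
  have h := (lower (y + e) (by rwa [dist_eq_norm])).trans (upper (y + e) (by rwa [dist_eq_norm]))
  have split : ⟪p, y + e - x⟫ = ⟪p, y - x⟫ + ⟪p, e⟫ := by
    rw [← inner_add_right]; congr 1; abel
  rw [split, add_sub_cancel_left] at h
  have hsq : ‖y + e - x‖ ^ 2 ≤ (2 * dist y x) ^ 2 := by gcongr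
  have hle : dist y x * ‖p - q‖ ≤ dist y x * (2 * c * dist y x) := by
    rw [← inner_e, inner_sub_left]
    nlinarith [mul_le_mul_of_nonneg_left hsq hc]
  rw [dist_eq_norm p q]
  exact le_of_mul_le_mul_left hle hr

variable [CompleteSpace E] {f : E → ℝ} {g : E → E} {H : E →L[ℝ] E} {x : E}

/-- `g` is the gradient of `f` near `x`, and `H`, viewed as an operator, is the Hessian of `f`
at `x`. -/
def HasHessianAt (f : E → ℝ) (g : E → E) (H : E →L[ℝ] E) (x : E) : Prop :=
  (∀ᶠ z in 𝓝 x, HasGradientAt f (g z) z) ∧ HasFDerivAt g H x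

theorem HasHessianAt.hasGradientAt (h : HasHessianAt f g H x) : HasGradientAt f (g x) x :=
  h.1.self_of_nhds

theorem hasDerivAt_comp_line {p : E} (v : E) {s : ℝ} (h : HasGradientAt f p (x + s • v)) :
    HasDerivAt (fun s : ℝ => f (x + s • v)) ⟪p, v⟫ s := by
  have hline : HasDerivAt (fun s : ℝ => x + s • v) v s := by
    simpa using ((hasDerivAt_id s).smul_const v).const_add x
  exact h.hasFDerivAt.comp_hasDerivAt s hline

theorem HasHessianAt.isLittleO_taylor (h : HasHessianAt f g H x) :
    (fun z => f z - f x - ⟪g x, z - x⟫ - ⟪H (z - x), z - x⟫ / 2) =o[𝓝 x]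
      fun z => ‖z - x‖ ^ 2 := by
  refine Asymptotics.isLittleO_iff.2 fun ε hε => ?_
  obtain ⟨δ, hδ, hball⟩ := Metric.eventually_nhds_iff_ball.1 (h.1.and (h.2.isLittleO.def hε))
  filter_upwards [ball_mem_nhds x hδ] with z hz
  set v := z - x with hv
  have mem_ball : ∀ s ∈ Icc (0 : ℝ) 1, x + s • v ∈ ball x δ := fun s hs => by
    have := (convex_ball x δ).add_smul_sub_mem (mem_ball_self hδ) hz hs
    rwa [← hv] at this
  let φ (s : ℝ) : ℝ := f (x + s • v) - s * ⟪g x, v⟫ - s ^ 2 / 2 * ⟪H v, v⟫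
  have deriv_φ : ∀ s ∈ Icc (0 : ℝ) 1, HasDerivAt φ ⟪g (x + s • v) - g x - H (s • v), v⟫ s := by
    intro s hs
    have h1 := hasDerivAt_comp_line v (hball _ (mem_ball s hs)).1
    have h2 := (hasDerivAt_id s).mul_const ⟪g x, v⟫
    have h3 := (((hasDerivAt_id s).pow 2).div_const 2).mul_const ⟪H v, v⟫
    refine ((h1.sub h2).sub h3).congr_deriv ?_
    simp only [inner_sub_left, map_smul, real_inner_smul_left, id]
    push_cast
    ring
  have bound : ∀ s ∈ Ico (0 : ℝ) 1,
      ‖⟪g (x + s • v) - g x - H (s • v), v⟫‖ ≤ ε * ‖v‖ ^ 2 := by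
    intro s hs
    have hrem := (hball _ (mem_ball s (Ico_subset_Icc_self hs))).2
    rw [add_sub_cancel_left, norm_smul, Real.norm_of_nonneg hs.1] at hrem
    calc ‖⟪g (x + s • v) - g x - H (s • v), v⟫‖
        ≤ ‖g (x + s • v) - g x - H (s • v)‖ * ‖v‖ := norm_inner_le_norm _ _
      _ ≤ ε * (1 * ‖v‖) * ‖v‖ := by
          refine mul_le_mul_of_nonneg_right (hrem.trans ?_) (norm_nonneg _)
          gcongr
          exact hs.2.le
      _ = ε * ‖v‖ ^ 2 := by ring
  have increment : φ 1 - φ 0 = f z - f x - ⟪g x, v⟫ - ⟪H v, v⟫ / 2 := by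
    simp only [φ, hv, one_smul, zero_smul, add_sub_cancel, add_zero]
    ring
  rw [Real.norm_of_nonneg (sq_nonneg ‖v‖), ← increment]
  exact norm_image_sub_le_of_norm_deriv_le_segment_01'
    (fun s hs => (deriv_φ s hs).hasDerivWithinAt) bound

theorem HasHessianAt.eventually_lower_bound (h : HasHessianAt f g H x) {c c' : ℝ}
    (hH : ∀ v, -⟪H v, v⟫ ≤ c * ‖v‖ ^ 2) (hc : c < c') :
    ∀ᶠ z in 𝓝 x, f x + ⟪g x, z - x⟫ - c' / 2 * ‖z - x‖ ^ 2 ≤ f z := by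
  filter_upwards [h.isLittleO_taylor.def (half_pos (sub_pos.2 hc))] with z hz
  rw [Real.norm_of_nonneg (sq_nonneg _)] at hz
  linarith [(abs_le.1 hz).1, hH (z - x)]

theorem HasHessianAt.eq_of_eventually_le_affine (h : HasHessianAt f g H x) {p : E}
    (hmax : ∀ᶠ z in 𝓝 x, f z ≤ f x + ⟪p, z - x⟫) : g x = p := by
  have hlocal : IsLocalMax (fun z => f z - ⟪p, z - x⟫) x := by
    filter_upwards [hmax] with z hz
    simpa using by linarith
  have hp : HasFDerivAt (fun z => ⟪p, z - x⟫) (innerSL ℝ p) x := by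
    exact (innerSL ℝ p).hasFDerivAt.comp x ((hasFDerivAt_id x).sub_const x)
  have hzero := hlocal.hasFDerivAt_eq_zero (h.hasGradientAt.hasFDerivAt.sub hp)
  refine ext_inner_right ℝ fun v => ?_
  simpa [sub_eq_zero] using DFunLike.congr_fun hzero v

theorem HasHessianAt.inner_nonpos (h : HasHessianAt f g H x)
    (hmax : ∀ᶠ z in 𝓝 x, f z ≤ f x + ⟪g x, z - x⟫) (v : E) : ⟪H v, v⟫ ≤ 0 := by
  by_contra! hpos
  have hv : 0 < ‖v‖ := norm_pos_iff.2 fun h0 => by simp [h0] at hpos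
  have hline : Tendsto (fun s : ℝ => x + s • v) (𝓝[>] 0) (𝓝 x) := by
    have : Continuous fun s : ℝ => x + s • v := by fun_prop
    simpa using (this.tendsto 0).mono_left nhdsWithin_le_nhds
  have hε : 0 < ⟪H v, v⟫ / (4 * ‖v‖ ^ 2) := by positivity
  obtain ⟨s, ⟨hrem, hle⟩, hs⟩ := ((hline.eventually ((h.isLittleO_taylor.def hε).and hmax)).and
    self_mem_nhdsWithin).exists
  have hs : 0 < s := hs
  simp only [add_sub_cancel_left, norm_smul, map_smul, real_inner_smul_left,
    real_inner_smul_right, mul_pow, Real.norm_of_nonneg hs.le] at hrem hle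
  rw [Real.norm_of_nonneg (by positivity : 0 ≤ s ^ 2 * ‖v‖ ^ 2)] at hrem
  have hcoef : ⟪H v, v⟫ / (4 * ‖v‖ ^ 2) * (s ^ 2 * ‖v‖ ^ 2) = s ^ 2 * ⟪H v, v⟫ / 4 := by
    field_simp
  have hrem' := (abs_le.1 (hrem.trans_eq hcoef)).1
  nlinarith [mul_pos (pow_pos hs 2) hpos]

end SecondOrder

section ContactSet

variable {E T : Type*} [NormedAddCommGroup E] [InnerProductSpace ℝ E]

/-- `X` is a contact point of slope `p`: the affine function of slope `p` in the space variable,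
constant in time, that agrees with `v` at `X` lies above `v` on `D`. -/
def IsContactPoint (v : E × T → ℝ) (D : Set (E × T)) (p : E) (X : E × T) : Prop :=
  X ∈ D ∧ ∀ Z ∈ D, v Z ≤ v X + ⟪p, Z.1 - X.1⟫

/-- The upper contact set of `v` for slopes of norm at most `m`; the slope at a point is
prescribed by `G`, which stands for the spatial gradient of `v`. -/
def contactSet (v : E × T → ℝ) (G : E × T → E) (D : Set (E × T)) (m : ℝ) : Set (E × T) :=
  {X | ‖G X‖ ≤ m ∧ IsContactPoint v D (G X) X}

/-- A neighbourhood of `X` in its time slice lies in `D`, and on this slice `v` has gradient `G`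
near `X` and Hessian `H X` at `X`. -/
def HasSliceHessianAt [CompleteSpace E] (v : E × T → ℝ) (D : Set (E × T)) (G : E × T → E)
    (H : E × T → E →L[ℝ] E) (X : E × T) : Prop :=
  (∀ᶠ z in 𝓝 X.1, (z, X.2) ∈ D) ∧
    HasHessianAt (fun z => v (z, X.2)) (fun z => G (z, X.2)) (H X) X.1

variable {v : E × T → ℝ} {G : E × T → E} {D : Set (E × T)} {H : E × T → E →L[ℝ] E} {m : ℝ}
  {p q : E} {X Y : E × T}

theorem IsContactPoint.of_fst_eq (hX : IsContactPoint v D p X) (hY : IsContactPoint v D q Y)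
    (h : Y.1 = X.1) : IsContactPoint v D q X := by
  have hYX : v Y ≤ v X := by simpa [h] using hX.2 Y hY.1
  exact ⟨hX.1, fun Z hZ => (hY.2 Z hZ).trans (by rw [h]; gcongr)⟩

theorem IsContactPoint.slope_eq [CompleteSpace E] (hX : IsContactPoint v D p X)
    (hH : HasSliceHessianAt v D G H X) : G X = p :=
  hH.2.eq_of_eventually_le_affine (hH.1.mono fun z hz => hX.2 (z, X.2) hz)

theorem lipschitzBoundOn_comp_section [CompleteSpace E] {sec : E → E × T} {h : E → ℝ≥0}
    (hslice : ∀ X ∈ contactSet v G D m, HasSliceHessianAt v D G H X)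
    (hsec : ∀ x ∈ Prod.fst '' contactSet v G D m, sec x ∈ contactSet v G D m ∧ (sec x).1 = x)
    (hh : ∀ x ∈ Prod.fst '' contactSet v G D m, ∀ w, -⟪H (sec x) w, w⟫ ≤ h x * ‖w‖ ^ 2) :
    LipschitzBoundOn (G ∘ sec) (fun x => 2 * h x) (Prod.fst '' contactSet v G D m) := by
  intro x hx c hc
  obtain ⟨hX, hXx⟩ := hsec x hx
  obtain ⟨D_nhds, hess⟩ := hslice _ hX
  have hc' : (h x : ℝ) < c / 2 := (lt_div_iff₀' two_pos).2 (by exact_mod_cast hc)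
  obtain ⟨δ, hδ, hball⟩ := Metric.eventually_nhds_iff.1
    (D_nhds.and (hess.eventually_lower_bound (hh x hx) hc'))
  filter_upwards [self_mem_nhdsWithin, nhdsWithin_le_nhds (ball_mem_nhds x (half_pos hδ))]
    with y hy hyδ
  obtain ⟨hY, hYy⟩ := hsec y hy
  rcases eq_or_ne y x with rfl | hyx
  · simp
  have near : ∀ z, dist z x ≤ 2 * dist y x → dist z (sec x).1 < δ := fun z hz => by
    rw [hXx]; linarith [mem_ball.1 hyδ]
  have upper (z : E) (hz : dist z x ≤ 2 * dist y x) :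
      v (z, (sec x).2) ≤ v (sec y) + ⟪G (sec y), z - y⟫ := by
    simpa only [hYy] using hY.2.2 (z, (sec x).2) (hball (near z hz)).1
  have touch : v (sec y) ≤ v (x, (sec x).2) + ⟪G (x, (sec x).2), y - x⟫ := by
    have := hX.2.2 _ hY.2.1
    rwa [hYy, hXx, show sec x = (x, (sec x).2) from Prod.ext hXx rfl] at this
  have lower (z : E) (hz : dist z x ≤ 2 * dist y x) := (hball (near z hz)).2
  simp only [hXx] at lower
  have key := dist_le_of_affine_le (by positivity) hyx lower upper touch
  rw [show (x, (sec x).2) = sec x from Prod.ext hXx.symm rfl, mul_div_cancel₀ _ two_ne_zero,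
    dist_comm] at key
  exact key

variable [TopologicalSpace T]

theorem exists_isContactPoint (hD : IsCompact D) (hD' : D.Nonempty) (hv : ContinuousOn v D)
    (p : E) : ∃ X, IsContactPoint v D p X := by
  obtain ⟨X, hX, hmax⟩ := hD.exists_isMaxOn hD'
    (hv.sub (by fun_prop : ContinuousOn (fun Z : E × T => ⟪p, Z.1⟫) D))
  refine ⟨X, hX, fun Z hZ => ?_⟩
  have : v Z - ⟪p, Z.1⟫ ≤ v X - ⟪p, X.1⟫ := hmax hZ
  rw [inner_sub_right]
  linarith

theorem isCompact_contactSet [T2Space T] (hD : IsCompact D) (hv : ContinuousOn v D)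
    (hG : ContinuousOn G D) : IsCompact (contactSet v G D m) := by
  have contactSet_eq : contactSet v G D m = {X ∈ D | ‖G X‖ ≤ m} ∩
      ⋂ Z ∈ D, {X ∈ D | v Z ≤ v X + ⟪G X, Z.1 - X.1⟫} := by
    ext X
    simp only [contactSet, IsContactPoint, mem_ofPred_eq, mem_inter_iff, mem_iInter]
    grind
  rw [contactSet_eq]
  refine hD.of_isClosed_subset (.inter ?_ ?_) fun X hX => hX.1.1
  · exact hD.isClosed.isClosed_le hG.norm continuousOn_const
  · refine isClosed_biInter fun Z _ => hD.isClosed.isClosed_le continuousOn_const ?_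
    fun_prop

variable [FiniteDimensional ℝ E] [MeasurableSpace E] [BorelSpace E] {μ : Measure E}
  [μ.IsAddHaarMeasure]

theorem addHaar_image_contactSet_le [T2Space T] [Nonempty T] {τ : E × T → ℝ} {h : E → ℝ≥0∞}
    (hD : IsCompact D) (hv : ContinuousOn v D) (hG : ContinuousOn G D) (hτ : ContinuousOn τ D)
    (hslice : ∀ X ∈ contactSet v G D m, HasSliceHessianAt v D G H X)
    (hHτ : ∀ X ∈ contactSet v G D m, ∀ w, -⟪H X w, w⟫ ≤ τ X * ‖w‖ ^ 2)
    (hτh : ∀ X ∈ contactSet v G D m, ENNReal.ofReal (τ X) ≤ h X.1) :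
    μ (G '' contactSet v G D m) ≤ 2 ^ Module.finrank ℝ E *
      ∫⁻ x in Prod.fst '' contactSet v G D m, h x ^ Module.finrank ℝ E ∂μ := by
  have hK : IsCompact (contactSet v G D m) := isCompact_contactSet hD hv hG
  obtain ⟨sec, hsec, hmeas⟩ := exists_section_measurable_toNNReal hK (hτ.mono fun X hX => hX.2.1)
  have hS : IsCompact (Prod.fst '' contactSet v G D m) := hK.image continuous_fst
  set K := contactSet v G D m
  set S := Prod.fst '' K
  set η : E → ℝ≥0 := S.indicator fun x => (τ (sec x)).toNNReal
  have image_eq : G '' K = (G ∘ sec) '' S := by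
    refine Subset.antisymm ?_ ?_
    · rintro _ ⟨Y, hY, rfl⟩
      have hsecY := hsec Y.1 ⟨Y, hY, rfl⟩
      exact ⟨Y.1, ⟨Y, hY, rfl⟩,
        (hsecY.1.2.of_fst_eq hY.2 hsecY.2.symm).slope_eq (hslice _ hsecY.1)⟩
    · rintro _ ⟨x, hx, rfl⟩
      exact ⟨sec x, (hsec x hx).1, rfl⟩
  have bound : LipschitzBoundOn (G ∘ sec) (fun x => 2 * η x) S := by
    refine lipschitzBoundOn_comp_section hslice hsec fun x hx w => ?_
    refine (hHτ _ (hsec x hx).1 w).trans ?_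
    rw [show η x = (τ (sec x)).toNNReal from indicator_of_mem hx _]
    gcongr
    exact Real.le_coe_toNNReal _
  calc μ (G '' K) ≤ ∫⁻ x in S, ((2 * η x : ℝ≥0) : ℝ≥0∞) ^ Module.finrank ℝ E ∂μ := by
        rw [image_eq]
        exact addHaar_image_le_lintegral_pow hS.measurableSet hS.measure_ne_top
          (hmeas.const_mul 2) bound
    _ = 2 ^ Module.finrank ℝ E * ∫⁻ x in S, (η x : ℝ≥0∞) ^ Module.finrank ℝ E ∂μ := by
        simp_rw [ENNReal.coe_mul, mul_pow]
        exact lintegral_const_mul _ (by fun_prop)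
    _ ≤ 2 ^ Module.finrank ℝ E * ∫⁻ x in S, h x ^ Module.finrank ℝ E ∂μ := by
        gcongr 2 ^ _ * ?_
        refine setLIntegral_mono' hS.measurableSet fun x hx => ?_
        have hle := hτh _ (hsec x hx).1
        rw [(hsec x hx).2] at hle
        rw [show η x = (τ (sec x)).toNNReal from indicator_of_mem hx _]
        gcongr
        exact hle

end ContactSet

section EllipticMatrix

variable {ι : Type*} [Fintype ι]

theorem mul_trace_le_trace_mul {A Q : Matrix ι ι ℝ} {c : ℝ} (hQ : Q.PosSemidef)
    (hA : ∀ ξ : ι → ℝ, c * (ξ ⬝ᵥ ξ) ≤ ξ ⬝ᵥ A *ᵥ ξ) : c * Q.trace ≤ (A * Q).trace := by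
  classical
  obtain ⟨m, w, rfl⟩ := posSemidef_iff_eq_sum_vecMulVec.1 hQ
  simp only [Finset.mul_sum, trace_sum, mul_vecMulVec, trace_vecMulVec,
    star_trivial]
  exact Finset.sum_le_sum fun k _ => (hA (w k)).trans_eq (dotProduct_comm _ _)

theorem dotProduct_mulVec_le_trace_mul {Q : Matrix ι ι ℝ} (hQ : Q.PosSemidef) (ξ : ι → ℝ) :
    ξ ⬝ᵥ Q *ᵥ ξ ≤ Q.trace * (ξ ⬝ᵥ ξ) := by
  classical
  obtain ⟨m, w, rfl⟩ := posSemidef_iff_eq_sum_vecMulVec.1 hQ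
  simp only [sum_mulVec, dotProduct_sum, trace_sum, trace_vecMulVec,
    Finset.sum_mul, star_trivial, vecMulVec_mulVec]
  refine Finset.sum_le_sum fun k _ => ?_
  rw [op_smul_eq_smul, dotProduct_smul, dotProduct_comm ξ, smul_eq_mul]
  simpa only [dotProduct, sq] using Finset.sum_mul_sq_le_sq_mul_sq Finset.univ (w k) ξ

/-- The class of constant coefficient matrices allowed by uniform parabolicity with constant
`ν`. -/
def UniformlyElliptic (ν : ℝ) (A : Matrix ι ι ℝ) : Prop :=
  (∀ ξ : ι → ℝ, ν⁻¹ * (ξ ⬝ᵥ ξ) ≤ ξ ⬝ᵥ A *ᵥ ξ) ∧ ∑ i, ∑ j, A i j ^ 2 ≤ ν ^ 2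

namespace UniformlyElliptic

variable {ν : ℝ} {A : Matrix ι ι ℝ}

theorem abs_apply_le (hA : UniformlyElliptic ν A) (hν : 0 ≤ ν) (i j : ι) : |A i j| ≤ ν := by
  refine abs_le_of_sq_le_sq (le_trans ?_ hA.2) hν
  calc A i j ^ 2 ≤ ∑ j, A i j ^ 2 :=
        Finset.single_le_sum (fun j _ => sq_nonneg (A i j)) (Finset.mem_univ j)
    _ ≤ ∑ i, ∑ j, A i j ^ 2 :=
        Finset.single_le_sum (f := fun i => ∑ j, A i j ^ 2)
          (fun i _ => Finset.sum_nonneg fun j _ => sq_nonneg _) (Finset.mem_univ i)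

theorem trace_le (hA : UniformlyElliptic ν A) (hν : 0 ≤ ν) : A.trace ≤ Fintype.card ι * ν := by
  rw [← nsmul_eq_mul]
  exact Finset.sum_le_card_nsmul _ _ _ fun i _ => (abs_le.1 (hA.abs_apply_le hν i i)).2

theorem trace_le_mul_trace_mul (hA : UniformlyElliptic ν A) (hν : 0 < ν) {Q : Matrix ι ι ℝ}
    (hQ : Q.PosSemidef) : Q.trace ≤ ν * (A * Q).trace :=
  (inv_mul_le_iff₀ hν).1 (mul_trace_le_trace_mul hQ hA.1)

theorem isCompact_setOf (hν : 0 ≤ ν) : IsCompact {A : Matrix ι ι ℝ | UniformlyElliptic ν A} := by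
  have bounded : IsCompact {A : Matrix ι ι ℝ | ∀ i, A i ∈ {w : ι → ℝ | ∀ j, w j ∈ Icc (-ν) ν}} :=
    isCompact_pi_infinite fun _ => isCompact_pi_infinite fun _ => isCompact_Icc
  refine bounded.of_isClosed_subset ?_ fun A hA i j => abs_le.1 (abs_apply_le hA hν i j)
  have setOf_eq : {A : Matrix ι ι ℝ | UniformlyElliptic ν A} =
      (⋂ ξ : ι → ℝ, {A | ν⁻¹ * (ξ ⬝ᵥ ξ) ≤ ξ ⬝ᵥ A *ᵥ ξ}) ∩ {A | ∑ i, ∑ j, A i j ^ 2 ≤ ν ^ 2} := by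
    ext A; simp [UniformlyElliptic]
  rw [setOf_eq]
  exact .inter (isClosed_iInter fun ξ => isClosed_le (by fun_prop) (by fun_prop))
    (isClosed_le (by fun_prop) (by fun_prop))

end UniformlyElliptic

end EllipticMatrix

section ParabolicDerivs

/-- `u` has time derivative `ut`, spatial gradient `g` and spatial Hessian matrix `H` on `O`, all
continuous. Derivatives are carried along explicitly so that sums and barriers need no junk-valued
derivative operators. -/
structure HasParabolicDerivs (u ut : En n × ℝ → ℝ) (g : En n × ℝ → En n)
    (H : En n × ℝ → Matrix (Fin n) (Fin n) ℝ) (O : Set (En n × ℝ)) : Prop where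
  continuousOn : ContinuousOn u O
  continuousOn_time : ContinuousOn ut O
  continuousOn_grad : ContinuousOn g O
  continuousOn_hess : ContinuousOn H O
  hasDerivAt : ∀ X ∈ O, HasDerivAt (fun t => u (X.1, t)) (ut X) X.2
  hasGradientAt : ∀ X ∈ O, HasGradientAt (fun z => u (z, X.2)) (g X) X.1
  hasFDerivAt : ∀ X ∈ O,
    HasFDerivAt (fun z => g (z, X.2)) (toEuclideanCLM (𝕜 := ℝ) (H X)) X.1

namespace HasParabolicDerivs

variable {u ut v vt : En n × ℝ → ℝ} {g k : En n × ℝ → En n}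
  {H K : En n × ℝ → Matrix (Fin n) (Fin n) ℝ} {O O' : Set (En n × ℝ)} {X : En n × ℝ}

theorem mono (h : HasParabolicDerivs u ut g H O) (hO : O' ⊆ O) :
    HasParabolicDerivs u ut g H O' where
  continuousOn := h.continuousOn.mono hO
  continuousOn_time := h.continuousOn_time.mono hO
  continuousOn_grad := h.continuousOn_grad.mono hO
  continuousOn_hess := h.continuousOn_hess.mono hO
  hasDerivAt X hX := h.hasDerivAt X (hO hX)
  hasGradientAt X hX := h.hasGradientAt X (hO hX)
  hasFDerivAt X hX := h.hasFDerivAt X (hO hX)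

theorem sub (hu : HasParabolicDerivs u ut g H O) (hv : HasParabolicDerivs v vt k K O) :
    HasParabolicDerivs (u - v) (ut - vt) (g - k) (H - K) O where
  continuousOn := hu.continuousOn.sub hv.continuousOn
  continuousOn_time := hu.continuousOn_time.sub hv.continuousOn_time
  continuousOn_grad := hu.continuousOn_grad.sub hv.continuousOn_grad
  continuousOn_hess := hu.continuousOn_hess.sub hv.continuousOn_hess
  hasDerivAt X hX := (hu.hasDerivAt X hX).sub (hv.hasDerivAt X hX)
  hasGradientAt X hX := by
    rw [hasGradientAt_iff_hasFDerivAt, Pi.sub_apply, map_sub]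
    exact (hu.hasGradientAt X hX).hasFDerivAt.sub (hv.hasGradientAt X hX).hasFDerivAt
  hasFDerivAt X hX := by
    rw [Pi.sub_apply, map_sub]
    exact (hu.hasFDerivAt X hX).sub (hv.hasFDerivAt X hX)

theorem hasSliceHessianAt (h : HasParabolicDerivs u ut g H O) {D : Set (En n × ℝ)} (hD : D ⊆ O)
    (hX : ∀ᶠ z in 𝓝 X.1, (z, X.2) ∈ D) :
    HasSliceHessianAt u D g (fun X => toEuclideanCLM (𝕜 := ℝ) (H X)) X :=
  ⟨hX, hX.mono fun z hz => h.hasGradientAt (z, X.2) (hD hz), h.hasFDerivAt X (hD hX.self_of_nhds)⟩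

theorem isSymm (h : HasParabolicDerivs u ut g H O) (hO : IsOpen O) (hX : X ∈ O) :
    (H X).IsSymm := by
  have slice_nhds : ∀ᶠ z in 𝓝 X.1, (z, X.2) ∈ O :=
    (by fun_prop : ContinuousAt (fun z : En n => (z, X.2)) X.1).eventually (hO.mem_nhds hX)
  have first : ∀ᶠ z in 𝓝 X.1, HasFDerivAt (fun z => u (z, X.2))
      (InnerProductSpace.toDual ℝ (En n) (g (z, X.2))) z :=
    slice_nhds.mono fun z hz => (h.hasGradientAt (z, X.2) hz).hasFDerivAt
  have second := ((InnerProductSpace.toDual ℝ (En n)).toContinuousLinearEquiv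
    |>.toContinuousLinearMap.hasFDerivAt).comp X.1 (h.hasFDerivAt X hX)
  ext i j
  simpa [EuclideanSpace.inner_single_right] using second_derivative_symmetric_of_eventually_of_real
    first second (EuclideanSpace.single i 1) (EuclideanSpace.single j 1)

theorem posSemidef_neg_hess (h : HasParabolicDerivs u ut g H O) (hO : IsOpen O) (hX : X ∈ O)
    (hmax : ∀ᶠ z in 𝓝 X.1, u (z, X.2) ≤ u X + ⟪g X, z - X.1⟫) : (-(H X)).PosSemidef := by
  have slice_nhds : ∀ᶠ z in 𝓝 X.1, (z, X.2) ∈ O :=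
    (by fun_prop : ContinuousAt (fun z : En n => (z, X.2)) X.1).eventually (hO.mem_nhds hX)
  refine .of_dotProduct_mulVec_nonneg (isHermitian_iff_isSymm.2 (h.isSymm hO hX).neg) fun ξ => ?_
  have hξ := (h.hasSliceHessianAt Subset.rfl slice_nhds).2.inner_nonpos hmax (WithLp.toLp 2 ξ)
  rw [real_inner_comm, inner_toEuclideanCLM] at hξ
  simpa [neg_mulVec] using hξ

theorem zero_le_of_forall_le (h : HasParabolicDerivs u ut g H O) (hX : X ∈ O) {t₀ : ℝ}
    (ht : t₀ < X.2) (hmax : ∀ s ∈ Icc t₀ X.2, u (X.1, s) ≤ u X) : 0 ≤ ut X := by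
  have hlocal : IsLocalMaxOn (fun t => u (X.1, t)) (Icc t₀ X.2) X.2 :=
    eventually_mem_nhdsWithin.mono hmax
  have hcone : t₀ - X.2 ∈ posTangentConeAt (Icc t₀ X.2) X.2 := by
    refine mem_posTangentConeAt_of_segment_subset ?_
    rw [add_sub_cancel, segment_symm, segment_eq_Icc ht.le]
  have := hlocal.hasFDerivWithinAt_nonpos
    (h.hasDerivAt X hX).hasFDerivAt.hasFDerivWithinAt hcone
  simp only [ContinuousLinearMap.toSpanSingleton_apply, smul_eq_mul] at this
  nlinarith

end HasParabolicDerivs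

/-- Spatial gradient. -/
def spatialGrad (u : En n × ℝ → ℝ) (X : En n × ℝ) : En n :=
  WithLp.toLp 2 fun i => Dx u i X

/-- Spatial Hessian matrix; the index order makes the entry in row `j` the derivative of `D_j u`,
so that the matrix represents the Jacobian of the gradient without appealing to symmetry. -/
def spatialHess (u : En n × ℝ → ℝ) (X : En n × ℝ) : Matrix (Fin n) (Fin n) ℝ :=
  Matrix.of fun j i => Dxx u i j X

theorem IsC21.hasGradientAt {u : En n × ℝ → ℝ} {O : Set (En n × ℝ)} (hu : IsC21 u O)
    {X : En n × ℝ} (hX : X ∈ O) : HasGradientAt (fun z => u (z, X.2)) (spatialGrad u X) X.1 := by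
  rw [hasGradientAt_iff_hasFDerivAt]
  refine (hu.diff_x X hX).hasFDerivAt.congr_fderiv ?_
  refine ContinuousLinearMap.coe_inj.1 ((EuclideanSpace.basisFun (Fin n) ℝ).toBasis.ext fun i => ?_)
  simp [spatialGrad, Dx, EuclideanSpace.inner_single_right]

theorem IsC21.hasFDerivAt_spatialGrad {u : En n × ℝ → ℝ} {O : Set (En n × ℝ)} (hu : IsC21 u O)
    {X : En n × ℝ} (hX : X ∈ O) : HasFDerivAt (fun z => spatialGrad u (z, X.2))
      (toEuclideanCLM (𝕜 := ℝ) (spatialHess u X)) X.1 := by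
  refine hasFDerivWithinAt_univ.1 <| hasFDerivWithinAt_euclidean.2 fun j =>
    hasFDerivWithinAt_univ.2 ?_
  refine (hu.diff_xx j X hX).hasFDerivAt.congr_fderiv ?_
  refine ContinuousLinearMap.coe_inj.1 ((EuclideanSpace.basisFun (Fin n) ℝ).toBasis.ext fun i => ?_)
  simp [spatialHess, Dxx, Dx]

theorem IsC21.hasParabolicDerivs {u : En n × ℝ → ℝ} {O : Set (En n × ℝ)} (hu : IsC21 u O) :
    HasParabolicDerivs u (Dt u) (spatialGrad u) (spatialHess u) O where
  continuousOn := hu.cont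
  continuousOn_time := hu.cont_t
  continuousOn_grad :=
    (PiLp.continuous_toLp 2 _).comp_continuousOn (continuousOn_pi.2 hu.cont_x)
  continuousOn_hess := continuousOn_pi.2 fun j => continuousOn_pi.2 fun i => hu.cont_xx i j
  hasDerivAt X hX := (hu.diff_t X hX).hasDerivAt
  hasGradientAt _ hX := hu.hasGradientAt hX
  hasFDerivAt _ hX := hu.hasFDerivAt_spatialGrad hX

end ParabolicDerivs

section ParabolicABP

/-- The closed cylinder `closedBall y R × [t₀, t₁]`. -/
def closedCyl (y : En n) (R t₀ t₁ : ℝ) : Set (En n × ℝ) := closedBall y R ×ˢ Icc t₀ t₁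

/-- The parabolic boundary of a closed cylinder: its bottom and its lateral boundary. -/
def parabolicBoundary (y : En n) (R t₀ t₁ : ℝ) : Set (En n × ℝ) :=
  {X ∈ closedCyl y R t₀ t₁ | X.2 = t₀ ∨ dist X.1 y = R}

variable {y : En n} {R t₀ t₁ m : ℝ} {v vt : En n × ℝ → ℝ} {g : En n × ℝ → En n}
  {H : En n × ℝ → Matrix (Fin n) (Fin n) ℝ} {O : Set (En n × ℝ)} {X Z : En n × ℝ}

theorem isCompact_closedCyl : IsCompact (closedCyl y R t₀ t₁) :=
  (isCompact_closedBall y R).prod isCompact_Icc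

theorem mem_ball_prod_Ioc (hX : X ∈ closedCyl y R t₀ t₁) (hX' : X ∉ parabolicBoundary y R t₀ t₁) :
    X ∈ ball y R ×ˢ Ioc t₀ t₁ := by
  have hne : X.2 ≠ t₀ ∧ dist X.1 y ≠ R := not_or.1 fun h => hX' ⟨hX, h⟩
  exact ⟨lt_of_le_of_ne hX.1 hne.2, lt_of_le_of_ne hX.2.1 hne.1.symm, hX.2.2⟩

theorem pos_of_isContactPoint {p : En n} (hX : IsContactPoint v (closedCyl y R t₀ t₁) p X)
    (hp : ‖p‖ ≤ m) (hZ : Z ∈ closedCyl y R t₀ t₁) (hm : 2 * R * m < v Z) : 0 < v X := by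
  have hdist : ‖Z.1 - X.1‖ ≤ 2 * R := by
    rw [← dist_eq_norm]
    linarith [dist_triangle_right Z.1 X.1 y, mem_closedBall.1 hZ.1, mem_closedBall.1 hX.1.1]
  have hinner : ⟪p, Z.1 - X.1⟫ ≤ 2 * R * m := calc
    ⟪p, Z.1 - X.1⟫ ≤ ‖p‖ * ‖Z.1 - X.1‖ := real_inner_le_norm _ _
    _ ≤ m * (2 * R) := by gcongr; exact (norm_nonneg p).trans hp
    _ = 2 * R * m := mul_comm _ _
  linarith [hX.2 Z hZ]

theorem interior_of_isContactPoint {p : En n}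
    (hX : IsContactPoint v (closedCyl y R t₀ t₁) p X) (hp : ‖p‖ ≤ m)
    (hbdry : ∀ X ∈ parabolicBoundary y R t₀ t₁, v X ≤ 0) (hZ : Z ∈ closedCyl y R t₀ t₁)
    (hm : 2 * R * m < v Z) :
    X ∈ ball y R ×ˢ Ioc t₀ t₁ ∧ ∀ᶠ z in 𝓝 X.1, (z, X.2) ∈ closedCyl y R t₀ t₁ := by
  have hint := mem_ball_prod_Ioc hX.1 fun h =>
    (hbdry X h).not_gt (pos_of_isContactPoint hX hp hZ hm)
  exact ⟨hint, (isOpen_ball.eventually_mem hint.1).mono fun z hz =>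
    ⟨ball_subset_closedBall hz, hX.1.2⟩⟩

/-- The parabolic Alexandrov–Bakelman–Pucci estimate in the form needed for drifts with a bound
independent of time: only the spatial contact slopes are counted, so the integral runs over space
alone. -/
theorem volume_ball_le_lintegral_trace {h : En n → ℝ≥0∞} (hv : HasParabolicDerivs v vt g H O)
    (hO : IsOpen O) (hsub : closedCyl y R t₀ t₁ ⊆ O)
    (hbdry : ∀ X ∈ parabolicBoundary y R t₀ t₁, v X ≤ 0) (hZ : Z ∈ closedCyl y R t₀ t₁)
    (hm : 2 * R * m < v Z)
    (hh : ∀ X ∈ ball y R ×ˢ Ioc t₀ t₁, 0 < v X → ‖g X‖ ≤ m → 0 ≤ vt X →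
      (-(H X)).PosSemidef → ENNReal.ofReal (-(H X)).trace ≤ h X.1) :
    volume (ball (0 : En n) m) ≤ 2 ^ n * ∫⁻ x in ball y R, h x ^ n := by
  set D := closedCyl y R t₀ t₁
  have interior : ∀ X ∈ contactSet v g D m,
      X ∈ ball y R ×ˢ Ioc t₀ t₁ ∧ ∀ᶠ z in 𝓝 X.1, (z, X.2) ∈ D :=
    fun X hX => interior_of_isContactPoint hX.2 hX.1 hbdry hZ hm
  have slice (X) (hX : X ∈ contactSet v g D m) :=
    hv.hasSliceHessianAt hsub (interior X hX).2
  have hess_nonpos : ∀ X ∈ contactSet v g D m, (-(H X)).PosSemidef := fun X hX =>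
    hv.posSemidef_neg_hess hO (hsub hX.2.1) ((interior X hX).2.mono fun z hz => hX.2.2 (z, X.2) hz)
  have ball_sub : ball 0 m ⊆ g '' contactSet v g D m := by
    intro p hp
    have hp : ‖p‖ ≤ m := (mem_ball_zero_iff.1 hp).le
    obtain ⟨X, hX⟩ := exists_isContactPoint isCompact_closedCyl ⟨Z, hZ⟩
      (hv.continuousOn.mono hsub) p
    have hgX : g X = p := hX.slope_eq
      (hv.hasSliceHessianAt hsub (interior_of_isContactPoint hX hp hbdry hZ hm).2)
    exact ⟨X, ⟨hgX ▸ hp, hgX ▸ hX⟩, hgX⟩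
  have quad_le : ∀ X ∈ contactSet v g D m, ∀ w : En n,
      -⟪toEuclideanCLM (𝕜 := ℝ) (H X) w, w⟫ ≤ (-(H X)).trace * ‖w‖ ^ 2 := fun X hX w => by
    have := dotProduct_mulVec_le_trace_mul (hess_nonpos X hX) (WithLp.ofLp w)
    rw [real_inner_comm, inner_toEuclideanCLM, EuclideanSpace.real_norm_sq_eq]
    simpa [neg_mulVec, dotProduct, sq] using this
  have trace_le : ∀ X ∈ contactSet v g D m, ENNReal.ofReal (-(H X)).trace ≤ h X.1 := fun X hX => by
    obtain ⟨hXball, hXtime⟩ := (interior X hX).1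
    refine hh X ⟨hXball, hXtime⟩ (pos_of_isContactPoint hX.2 hX.1 hZ hm) hX.1 ?_ (hess_nonpos X hX)
    refine hv.zero_le_of_forall_le (hsub hX.2.1) hXtime.1 fun s hs => ?_
    simpa using hX.2.2 (X.1, s) ⟨hX.2.1.1, hs.1, hs.2.trans hXtime.2⟩
  have trace_cont : ContinuousOn (fun X => (-(H X)).trace) D :=
    (by fun_prop : Continuous fun M : Matrix (Fin n) (Fin n) ℝ => (-M).trace).comp_continuousOn
      (hv.continuousOn_hess.mono hsub)
  calc volume (ball (0 : En n) m) ≤ volume (g '' contactSet v g D m) := measure_mono ball_sub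
    _ ≤ 2 ^ n * ∫⁻ x in Prod.fst '' contactSet v g D m, h x ^ n := by
        simpa only [finrank_euclideanSpace_fin] using
          addHaar_image_contactSet_le isCompact_closedCyl (hv.continuousOn.mono hsub)
            (hv.continuousOn_grad.mono hsub) trace_cont slice quad_le trace_le
    _ ≤ 2 ^ n * ∫⁻ x in ball y R, h x ^ n := by
        gcongr
        exact image_subset_iff.2 fun X hX => (interior X hX).1.1

end ParabolicABP

section PucciSupersolution

/-- Nonnegative supersolutions of the extremal (Pucci) inequality
`inf_A tr(A D²u) - β |Du| ≤ u_t` on `D`, where `A` runs over the uniformly elliptic matrices and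
the drift bound `β` depends on `x` alone. Nothing is required where `β` is infinite. -/
structure IsPucciSupersolution (ν : ℝ) (β : En n → ℝ≥0∞) (u : En n × ℝ → ℝ)
    (D : Set (En n × ℝ)) : Prop where
  exists_isC21 : ∃ O, IsOpen O ∧ D ⊆ O ∧ IsC21 u O
  nonneg : ∀ X ∈ D, 0 ≤ u X
  exists_trace_le : ∀ X ∈ D, β X.1 ≠ ⊤ → ∃ A : Matrix (Fin n) (Fin n) ℝ, UniformlyElliptic ν A ∧
    (A * spatialHess u X).trace ≤ Dt u X + (β X.1).toReal * ‖spatialGrad u X‖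

variable {ν : ℝ} {u : En n × ℝ → ℝ} {a : En n × ℝ → Matrix (Fin n) (Fin n) ℝ}
  {b : En n × ℝ → En n} {y : En n} {r t₀ t₁ : ℝ}

theorem IsPucciSupersolution.mono {β : En n → ℝ≥0∞} {D D' : Set (En n × ℝ)}
    (h : IsPucciSupersolution ν β u D) (hD : D' ⊆ D) : IsPucciSupersolution ν β u D' where
  exists_isC21 := let ⟨O, hO, hDO, hu⟩ := h.exists_isC21; ⟨O, hO, hD.trans hDO, hu⟩
  nonneg X hX := h.nonneg X (hD hX)
  exists_trace_le X hX := h.exists_trace_le X (hD hX)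

theorem UnifParabolic.uniformlyElliptic {Q : Set (En n × ℝ)} (ha : UnifParabolic ν a Q)
    {X : En n × ℝ} (hX : X ∈ Q) : UniformlyElliptic ν (a X) := by
  refine ⟨fun ξ => ?_, (ha X hX).2⟩
  convert (ha X hX).1 ξ using 1
  · simp only [dotProduct, sq]
  · simp only [dotProduct, mulVec, Finset.mul_sum]
    exact Finset.sum_congr rfl fun i _ => Finset.sum_congr rfl fun j _ => by ring

theorem trace_mul_spatialHess_le {X : En n × ℝ} {c : ℝ} (hX : -Dt u X + Lop a b u X ≤ 0)
    (hc : ‖b X‖ ≤ c) : (a X * spatialHess u X).trace ≤ Dt u X + c * ‖spatialGrad u X‖ := by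
  have trace_eq : (a X * spatialHess u X).trace = ∑ i, ∑ j, a X i j * Dxx u i j X := by
    simp [trace, mul_apply, spatialHess]
  have drift_eq : ∑ i, b X i * Dx u i X = ⟪b X, spatialGrad u X⟫ := by
    simp [PiLp.inner_apply, spatialGrad, mul_comm]
  have drift_le : -(c * ‖spatialGrad u X‖) ≤ ⟪b X, spatialGrad u X⟫ :=
    (neg_le_neg (by gcongr)).trans (abs_le.1 (abs_real_inner_le_norm _ _)).1
  rw [Lop, ← trace_eq, drift_eq] at hX
  linarith

theorem isClosed_setOf_exists_le {S E : Type*} [TopologicalSpace S] [T2Space S]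
    [TopologicalSpace E] [T2Space E] {K : Set S} {M : Set E} (hK : IsCompact K)
    (hM : IsCompact M) {F G : S × E → ℝ} (hF : ContinuousOn F (K ×ˢ M))
    (hG : ContinuousOn G (K ×ˢ M)) : IsClosed {s ∈ K | ∃ A ∈ M, F (s, A) ≤ G (s, A)} := by
  have compact : IsCompact {p ∈ K ×ˢ M | F p ≤ G p} :=
    (hK.prod hM).of_isClosed_subset ((hK.prod hM).isClosed.isClosed_le hF hG) (sep_subset _ _)
  convert (compact.image continuous_fst).isClosed using 1
  ext s
  simp [and_assoc]

theorem Icc_subset_of_isClosed_of_ae_mem {S : Set ℝ} (hS : IsClosed S) {t₀ t₁ : ℝ} (ht : t₀ < t₁)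
    (h : ∀ᵐ t, t ∈ Ioo t₀ t₁ → t ∈ S) : Icc t₀ t₁ ⊆ S := by
  rw [← closure_Ioo ht.ne]
  refine closure_minimal
    (((Measure.dense_of_ae h).open_subset_closure_inter isOpen_Ioo).trans ?_) hS
  exact closure_minimal (fun t ht => ht.2 ht.1) hS

theorem ae_norm_le_essSup_box (b : En n × ℝ → En n) {x : En n} (hx : x ∈ ball y r)
    (hfin : essSup (fun t => (‖b (x, t)‖₊ : ℝ≥0∞))
      (volume.restrict {t | (x, t) ∈ box y r t₀ t₁}) ≠ ⊤) :
    ∀ᵐ t, t ∈ Ioo t₀ t₁ → ‖b (x, t)‖ ≤ (essSup (fun t => (‖b (x, t)‖₊ : ℝ≥0∞))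
      (volume.restrict {t | (x, t) ∈ box y r t₀ t₁})).toReal := by
  have slice : {t | (x, t) ∈ box y r t₀ t₁} = Ioo t₀ t₁ := by ext; simp [box, mem_ball.1 hx]
  rw [← ae_restrict_iff' measurableSet_Ioo, ← slice]
  filter_upwards [ENNReal.ae_le_essSup fun t => (‖b (x, t)‖₊ : ℝ≥0∞)] with t ht
  simpa using ENNReal.toReal_mono hfin ht

theorem continuousOn_trace_mul {ι S : Type*} [Fintype ι] [TopologicalSpace S] {K : Set S}
    {A B : S → Matrix ι ι ℝ} (hA : ContinuousOn A K) (hB : ContinuousOn B K) :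
    ContinuousOn (fun s => (A s * B s).trace) K := by
  rw [continuousOn_iff_continuous_domRestrict] at hA hB ⊢
  exact (hA.matrix_mul hB).matrix_trace

/-- For almost every time the coefficient matrix itself is admissible; compactness of the class of
admissible matrices extends this to all times, although `a` and `b` need not be continuous. -/
theorem exists_uniformlyElliptic_trace_le {O : Set (En n × ℝ)} (hν : 0 ≤ ν) (hu : IsC21 u O)
    (hO : ball y r ×ˢ Icc t₀ t₁ ⊆ O) (ha : UnifParabolic ν a (box y r t₀ t₁))
    (heq : ∀ X ∈ box y r t₀ t₁, -Dt u X + Lop a b u X ≤ 0) {x : En n} (hx : x ∈ ball y r) {c : ℝ}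
    (ht : t₀ < t₁) (hc : ∀ᵐ t, t ∈ Ioo t₀ t₁ → ‖b (x, t)‖ ≤ c) {t : ℝ} (htt : t ∈ Icc t₀ t₁) :
    ∃ A : Matrix (Fin n) (Fin n) ℝ, UniformlyElliptic ν A ∧
      (A * spatialHess u (x, t)).trace ≤ Dt u (x, t) + c * ‖spatialGrad u (x, t)‖ := by
  have hD := hu.hasParabolicDerivs.mono hO
  set M := {A : Matrix (Fin n) (Fin n) ℝ | UniformlyElliptic ν A}
  have lift : MapsTo (fun p : ℝ × Matrix (Fin n) (Fin n) ℝ => (x, p.1)) (Icc t₀ t₁ ×ˢ M)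
      (ball y r ×ˢ Icc t₀ t₁) := fun p hp => ⟨hx, hp.1⟩
  have lift_cont : ContinuousOn (fun p : ℝ × Matrix (Fin n) (Fin n) ℝ => (x, p.1))
      (Icc t₀ t₁ ×ˢ M) := by fun_prop
  have hess_cont : ContinuousOn (fun p : ℝ × Matrix (Fin n) (Fin n) ℝ => spatialHess u (x, p.1))
      (Icc t₀ t₁ ×ˢ M) := hD.continuousOn_hess.comp lift_cont lift
  have trace_cont : ContinuousOn (fun p : ℝ × Matrix (Fin n) (Fin n) ℝ =>
      (p.2 * spatialHess u (x, p.1)).trace) (Icc t₀ t₁ ×ˢ M) :=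
    continuousOn_trace_mul continuousOn_snd hess_cont
  have drift_cont : ContinuousOn (fun p : ℝ × Matrix (Fin n) (Fin n) ℝ =>
      Dt u (x, p.1) + c * ‖spatialGrad u (x, p.1)‖) (Icc t₀ t₁ ×ˢ M) :=
    (hD.continuousOn_time.comp lift_cont lift).add
      (continuousOn_const.mul (hD.continuousOn_grad.comp lift_cont lift).norm)
  have closed := isClosed_setOf_exists_le isCompact_Icc (UniformlyElliptic.isCompact_setOf hν)
    trace_cont drift_cont
  refine (Icc_subset_of_isClosed_of_ae_mem closed ht ?_ htt).2
  filter_upwards [hc] with s hs hsI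
  have hX : (x, s) ∈ box y r t₀ t₁ := ⟨hx, hsI⟩
  exact ⟨Ioo_subset_Icc_self hsI, a (x, s), ha.uniformlyElliptic hX,
    trace_mul_spatialHess_le (heq _ hX) (hs hsI)⟩

theorem isPucciSupersolution_of_supersolution {O : Set (En n × ℝ)} (hν : 0 ≤ ν) (ht : t₀ < t₁)
    (hO : IsOpen O) (hQO : closure (box y r t₀ t₁) ⊆ O) (hu : IsC21 u O)
    (ha : UnifParabolic ν a (box y r t₀ t₁))
    (heq : ∀ X ∈ box y r t₀ t₁, -Dt u X + Lop a b u X ≤ 0)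
    (hpos : ∀ X ∈ box y r t₀ t₁, 0 < u X) :
    IsPucciSupersolution ν (fun x => essSup (fun t => (‖b (x, t)‖₊ : ℝ≥0∞))
      (volume.restrict {t | (x, t) ∈ box y r t₀ t₁})) u (ball y r ×ˢ Icc t₀ t₁) := by
  have cyl_sub : ball y r ×ˢ Icc t₀ t₁ ⊆ closure (box y r t₀ t₁) := by
    rw [box, closure_prod_eq, closure_Ioo ht.ne]
    exact prod_mono_left subset_closure
  exact
    { exists_isC21 := ⟨O, hO, cyl_sub.trans hQO, hu⟩
      nonneg := fun X hX => le_on_closure (fun X hX => (hpos X hX).le) continuousOn_const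
        (hu.cont.mono hQO) (cyl_sub hX)
      exists_trace_le := fun X hX hfin => exists_uniformlyElliptic_trace_le hν hu
        (cyl_sub.trans hQO) ha heq hX.1 ht (ae_norm_le_essSup_box b hX.1 hfin) hX.2 }

end PucciSupersolution

section Comparison

variable {y : En n} {R t₀ t₁ m P ν : ℝ} {β : En n → ℝ≥0∞} {u φ φt : En n × ℝ → ℝ}
  {k : En n × ℝ → En n} {K : En n × ℝ → Matrix (Fin n) (Fin n) ℝ} {D : Set (En n × ℝ)}
  {X Z : En n × ℝ}

/-- The inequality for `φ` is used with the matrix `A` supplied by `u`, about which only its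
ellipticity is known: hence `φ` has to be a subsolution for all admissible `A` at once. -/
theorem IsPucciSupersolution.trace_sub_le (hu : IsPucciSupersolution ν β u D) (hν : 0 < ν)
    (hX : X ∈ D) (hβ : β X.1 ≠ ⊤)
    (hφ : ∀ A : Matrix (Fin n) (Fin n) ℝ, UniformlyElliptic ν A → φt X ≤ (A * K X).trace)
    (hP : ‖k X‖ ≤ P) (hm : ‖k X - spatialGrad u X‖ ≤ m) (ht : Dt u X ≤ φt X)
    (hH : (-(K X - spatialHess u X)).PosSemidef) :
    (-(K X - spatialHess u X)).trace ≤ ν * (P + m) * (β X.1).toReal := by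
  obtain ⟨A, hA, htr⟩ := hu.exists_trace_le X hX hβ
  have grad_le : ‖spatialGrad u X‖ ≤ P + m := by
    linarith [norm_sub_rev (k X) (spatialGrad u X), norm_le_norm_add_norm_sub (k X)
      (spatialGrad u X)]
  calc (-(K X - spatialHess u X)).trace
      ≤ ν * (A * -(K X - spatialHess u X)).trace := hA.trace_le_mul_trace_mul hν hH
    _ = ν * ((A * spatialHess u X).trace - (A * K X).trace) := by
        rw [neg_sub, mul_sub, trace_sub]
    _ ≤ ν * ((β X.1).toReal * (P + m)) := by
        gcongr
        have : (β X.1).toReal * ‖spatialGrad u X‖ ≤ (β X.1).toReal * (P + m) := by gcongr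
        linarith [hφ A hA]
    _ = ν * (P + m) * (β X.1).toReal := by ring

theorem IsPucciSupersolution.volume_ball_le (hu : IsPucciSupersolution ν β u (closedCyl y R t₀ t₁))
    (hν : 0 < ν) (hφ : HasParabolicDerivs φ φt k K univ)
    (hsub : ∀ X ∈ closedCyl y R t₀ t₁, 0 < φ X →
      ∀ A : Matrix (Fin n) (Fin n) ℝ, UniformlyElliptic ν A → φt X ≤ (A * K X).trace)
    (hP : 0 < P) (hgrad : ∀ X ∈ closedCyl y R t₀ t₁, ‖k X‖ ≤ P)
    (hbdry : ∀ X ∈ parabolicBoundary y R t₀ t₁, φ X ≤ u X) (hZ : Z ∈ closedCyl y R t₀ t₁)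
    (hm : 2 * R * m < φ Z - u Z) :
    volume (ball (0 : En n) m) ≤
      2 ^ n * ∫⁻ x in ball y R, (ENNReal.ofReal (ν * (P + m)) * β x) ^ n := by
  obtain ⟨O, hO, hDO, huO⟩ := hu.exists_isC21
  refine volume_ball_le_lintegral_trace ((hφ.mono (subset_univ O)).sub huO.hasParabolicDerivs)
    hO hDO (fun X hX => sub_nonpos.2 (hbdry X hX)) hZ hm fun X hX hpos hslope htime hhess => ?_
  have hXD : X ∈ closedCyl y R t₀ t₁ :=
    prod_mono ball_subset_closedBall Ioc_subset_Icc_self hX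
  have hm0 : 0 ≤ m := (norm_nonneg _).trans hslope
  have coeff_pos : 0 < ν * (P + m) := by positivity
  obtain hβ | hβ := eq_or_ne (β X.1) ⊤
  · rw [hβ, ENNReal.mul_top (ENNReal.ofReal_pos.2 coeff_pos).ne']
    exact le_top
  · rw [← ENNReal.ofReal_toReal hβ, ← ENNReal.ofReal_mul coeff_pos.le]
    refine ENNReal.ofReal_le_ofReal (hu.trace_sub_le hν hXD hβ ?_ (hgrad X hXD) hslope
      (sub_nonneg.1 htime) hhess)
    exact hsub X hXD ((hu.nonneg X hXD).trans_lt (sub_pos.1 hpos))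

end Comparison

section Barrier

/-- The exponent of the barrier, in units of the parabolic scale `ρ`. It exceeds `-1`, and the
barrier is positive, exactly on the expanding region `|x - y|² < ρ² + 4 (t - t₀)`. -/
def barrierHeight (y : En n) (t₀ ρ : ℝ) (X : En n × ℝ) : ℝ :=
  (4 * (X.2 - t₀) - ‖X.1 - y‖ ^ 2) / ρ ^ 2

/-- The term `ℓ e^{Λη - κσ}` of the barrier, of which all its spatial derivatives are multiples; see
`barrier` for the notation. -/
def barrierWeight (y : En n) (t₀ ρ Λ κ ℓ : ℝ) (X : En n × ℝ) : ℝ :=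
  ℓ * Real.exp (Λ * barrierHeight y t₀ ρ X - κ * ((X.2 - t₀) / ρ ^ 2))

/-- The barrier `ℓ e^{-κσ} (e^{Λη} - e^{-Λ})`, with `σ = (t - t₀)/ρ²` and `η` the height: a large
`Λ` makes it a subsolution away from the axis, and then a large `κ` near the axis. -/
def barrier (y : En n) (t₀ ρ Λ κ ℓ : ℝ) (X : En n × ℝ) : ℝ :=
  barrierWeight y t₀ ρ Λ κ ℓ X - ℓ * Real.exp (-Λ - κ * ((X.2 - t₀) / ρ ^ 2))

/-- Time derivative of the barrier. -/
def barrierTime (y : En n) (t₀ ρ Λ κ ℓ : ℝ) (X : En n × ℝ) : ℝ :=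
  (4 * Λ * barrierWeight y t₀ ρ Λ κ ℓ X - κ * barrier y t₀ ρ Λ κ ℓ X) / ρ ^ 2

/-- Spatial gradient of the barrier. -/
def barrierGrad (y : En n) (t₀ ρ Λ κ ℓ : ℝ) (X : En n × ℝ) : En n :=
  (-(2 * Λ / ρ ^ 2) * barrierWeight y t₀ ρ Λ κ ℓ X) • (X.1 - y)

/-- Spatial Hessian of the barrier. -/
def barrierHess (y : En n) (t₀ ρ Λ κ ℓ : ℝ) (X : En n × ℝ) : Matrix (Fin n) (Fin n) ℝ :=
  barrierWeight y t₀ ρ Λ κ ℓ X • ((2 * Λ / ρ ^ 2) ^ 2 • vecMulVec (X.1 - y) (X.1 - y) -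
    (2 * Λ / ρ ^ 2) • (1 : Matrix (Fin n) (Fin n) ℝ))

variable {y : En n} {t₀ ρ Λ κ ℓ ν : ℝ} {u : En n × ℝ → ℝ} {X : En n × ℝ}

theorem continuous_barrierWeight : Continuous (barrierWeight y t₀ ρ Λ κ ℓ) := by
  unfold barrierWeight barrierHeight
  fun_prop

theorem continuous_barrier : Continuous (barrier y t₀ ρ Λ κ ℓ) := by
  unfold barrier
  have := continuous_barrierWeight (y := y) (t₀ := t₀) (ρ := ρ) (Λ := Λ) (κ := κ) (ℓ := ℓ)
  fun_prop

theorem hasGradientAt_barrierWeight (X : En n × ℝ) :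
    HasGradientAt (fun z => barrierWeight y t₀ ρ Λ κ ℓ (z, X.2)) (barrierGrad y t₀ ρ Λ κ ℓ X)
      X.1 := by
  rw [hasGradientAt_iff_hasFDerivAt]
  have height := (((((hasFDerivAt_id X.1).sub_const y).norm_sq.const_sub
    (4 * (X.2 - t₀))).mul_const (ρ ^ 2)⁻¹).const_mul Λ).sub_const (κ * ((X.2 - t₀) / ρ ^ 2))
  refine (height.exp.const_mul ℓ).congr_fderiv ?_
  ext v
  simp [barrierGrad, barrierWeight, barrierHeight, div_eq_mul_inv]
  ring

theorem hasGradientAt_barrier (X : En n × ℝ) :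
    HasGradientAt (fun z => barrier y t₀ ρ Λ κ ℓ (z, X.2)) (barrierGrad y t₀ ρ Λ κ ℓ X) X.1 :=
  hasGradientAt_iff_hasFDerivAt.2 ((hasGradientAt_barrierWeight X).hasFDerivAt.sub_const
    (ℓ * Real.exp (-Λ - κ * ((X.2 - t₀) / ρ ^ 2))))

theorem hasFDerivAt_barrierGrad (X : En n × ℝ) :
    HasFDerivAt (fun z => barrierGrad y t₀ ρ Λ κ ℓ (z, X.2))
      (toEuclideanCLM (𝕜 := ℝ) (barrierHess y t₀ ρ Λ κ ℓ X)) X.1 := by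
  refine ((hasGradientAt_barrierWeight X).hasFDerivAt.const_mul (-(2 * Λ / ρ ^ 2))).smul
    ((hasFDerivAt_id X.1).sub_const y) |>.congr_fderiv ?_
  ext v i
  simp [barrierHess, barrierGrad, vecMulVec_mulVec,
    EuclideanSpace.inner_eq_star_dotProduct, dotProduct_comm v.ofLp]
  ring

theorem hasDerivAt_barrier (X : En n × ℝ) :
    HasDerivAt (fun t => barrier y t₀ ρ Λ κ ℓ (X.1, t)) (barrierTime y t₀ ρ Λ κ ℓ X) X.2 := by
  have elapsed := (hasDerivAt_id X.2).sub_const t₀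
  have decay := (elapsed.div_const (ρ ^ 2)).const_mul κ
  have height := ((elapsed.const_mul 4).sub_const (‖X.1 - y‖ ^ 2)).div_const (ρ ^ 2)
  have weight := (((height.const_mul Λ).sub decay).exp).const_mul ℓ
  refine (weight.sub ((decay.const_sub (-Λ)).exp.const_mul ℓ)).congr_deriv ?_
  simp only [barrierTime, barrier, barrierWeight, barrierHeight, id, Pi.sub_apply]
  ring

theorem hasParabolicDerivs_barrier :
    HasParabolicDerivs (barrier y t₀ ρ Λ κ ℓ) (barrierTime y t₀ ρ Λ κ ℓ)
      (barrierGrad y t₀ ρ Λ κ ℓ) (barrierHess y t₀ ρ Λ κ ℓ) univ where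
  continuousOn := continuous_barrier.continuousOn
  continuousOn_time := (((continuous_barrierWeight.const_mul _).sub
    (continuous_barrier.const_mul κ)).div_const _).continuousOn
  continuousOn_grad := ((continuous_barrierWeight.const_mul _).smul
    (continuous_fst.sub continuous_const)).continuousOn
  continuousOn_hess := (continuous_barrierWeight.smul (by fun_prop)).continuousOn
  hasDerivAt X _ := hasDerivAt_barrier X
  hasGradientAt X _ := hasGradientAt_barrier X
  hasFDerivAt X _ := hasFDerivAt_barrierGrad X

theorem barrier_eq_weight_mul (X : En n × ℝ) : barrier y t₀ ρ Λ κ ℓ X =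
    barrierWeight y t₀ ρ Λ κ ℓ X * (1 - Real.exp (-Λ * (1 + barrierHeight y t₀ ρ X))) := by
  rw [barrier, barrierWeight, mul_sub, mul_one, mul_assoc, ← Real.exp_add]
  ring_nf

theorem barrierWeight_pos (hℓ : 0 < ℓ) : 0 < barrierWeight y t₀ ρ Λ κ ℓ X := by
  unfold barrierWeight
  positivity

theorem le_trace_mul_barrierHess {A : Matrix (Fin n) (Fin n) ℝ} (hA : UniformlyElliptic ν A)
    (hν : 0 ≤ ν) (hℓ : 0 < ℓ) (hΛ : 0 ≤ Λ) :
    2 * Λ * barrierWeight y t₀ ρ Λ κ ℓ X * (2 * Λ / ρ ^ 2 * ν⁻¹ * ‖X.1 - y‖ ^ 2 - n * ν) / ρ ^ 2 ≤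
      (A * barrierHess y t₀ ρ Λ κ ℓ X).trace := by
  set E := barrierWeight y t₀ ρ Λ κ ℓ X
  have hE : 0 < E := barrierWeight_pos hℓ
  set w : Fin n → ℝ := ⇑(X.1 - y)
  have norm_eq : ‖X.1 - y‖ ^ 2 = w ⬝ᵥ w := by
    rw [EuclideanSpace.real_norm_sq_eq]
    exact Finset.sum_congr rfl fun i _ => sq _
  have radial := hA.1 w
  have spherical : A.trace ≤ n * ν := by simpa using hA.trace_le hν
  calc 2 * Λ * E * (2 * Λ / ρ ^ 2 * ν⁻¹ * ‖X.1 - y‖ ^ 2 - n * ν) / ρ ^ 2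
      = E * ((2 * Λ / ρ ^ 2) ^ 2 * (ν⁻¹ * (w ⬝ᵥ w)) - 2 * Λ / ρ ^ 2 * (n * ν)) := by
        rw [norm_eq]; ring
    _ ≤ E * ((2 * Λ / ρ ^ 2) ^ 2 * (w ⬝ᵥ A *ᵥ w) - 2 * Λ / ρ ^ 2 * A.trace) := by gcongr
    _ = (A * barrierHess y t₀ ρ Λ κ ℓ X).trace := by
        simp [barrierHess, mul_sub, mul_vecMulVec, trace_vecMulVec, dotProduct_comm, E, w]

/-- Away from the axis the second derivative in the radial direction dominates everything else. -/
theorem barrierTime_le_trace_of_far {A : Matrix (Fin n) (Fin n) ℝ} (hA : UniformlyElliptic ν A)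
    (hν : 0 < ν) (hρ : 0 < ρ) (hℓ : 0 < ℓ) (hκ : 0 ≤ κ) (hΛ : ν * (2 + n * ν) ≤ Λ)
    (hpos : 0 ≤ barrier y t₀ ρ Λ κ ℓ X) (hfar : ρ ^ 2 / 2 ≤ ‖X.1 - y‖ ^ 2) :
    barrierTime y t₀ ρ Λ κ ℓ X ≤ (A * barrierHess y t₀ ρ Λ κ ℓ X).trace := by
  have hΛ0 : 0 ≤ Λ := le_trans (by positivity) hΛ
  set E := barrierWeight y t₀ ρ Λ κ ℓ X
  have hE : 0 < E := barrierWeight_pos hℓ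
  have radial : 2 + n * ν ≤ 2 * Λ / ρ ^ 2 * ν⁻¹ * ‖X.1 - y‖ ^ 2 := calc
    2 + n * ν ≤ Λ / ν := (le_div_iff₀' hν).2 hΛ
    _ = 2 * Λ / ρ ^ 2 * ν⁻¹ * (ρ ^ 2 / 2) := by field_simp
    _ ≤ _ := by gcongr
  refine le_trans ?_ (le_trace_mul_barrierHess hA hν.le hℓ hΛ0)
  unfold barrierTime
  gcongr ?_ / _
  calc 4 * Λ * E - κ * barrier y t₀ ρ Λ κ ℓ X ≤ 2 * Λ * E * 2 := by
        linarith [mul_nonneg hκ hpos]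
    _ ≤ 2 * Λ * E * (2 * Λ / ρ ^ 2 * ν⁻¹ * ‖X.1 - y‖ ^ 2 - n * ν) := by
        gcongr; linarith

/-- Near the axis the height is at least `-1/2`, so that the decay in time of the barrier is
comparable with its weight. -/
theorem barrierTime_le_trace_of_near {A : Matrix (Fin n) (Fin n) ℝ} (hA : UniformlyElliptic ν A)
    (hν : 0 < ν) (hρ : 0 < ρ) (hℓ : 0 < ℓ) (hΛ : 0 < Λ) (hκ0 : 0 ≤ κ)
    (hκ : Λ * (4 + 2 * n * ν) ≤ κ * (1 - Real.exp (-Λ / 2))) (ht : t₀ ≤ X.2)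
    (hnear : ‖X.1 - y‖ ^ 2 ≤ ρ ^ 2 / 2) :
    barrierTime y t₀ ρ Λ κ ℓ X ≤ (A * barrierHess y t₀ ρ Λ κ ℓ X).trace := by
  set E := barrierWeight y t₀ ρ Λ κ ℓ X
  have hE : 0 < E := barrierWeight_pos hℓ
  have height : -(1 / 2) ≤ barrierHeight y t₀ ρ X := by
    rw [barrierHeight, le_div_iff₀ (by positivity)]
    linarith
  have decay : Λ * (4 + 2 * n * ν) * E ≤ κ * barrier y t₀ ρ Λ κ ℓ X := calc
    Λ * (4 + 2 * n * ν) * E ≤ κ * (1 - Real.exp (-Λ / 2)) * E := by gcongr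
    _ ≤ κ * (1 - Real.exp (-Λ * (1 + barrierHeight y t₀ ρ X))) * E := by
        gcongr
        nlinarith
    _ = κ * barrier y t₀ ρ Λ κ ℓ X := by rw [barrier_eq_weight_mul]; ring
  refine le_trans ?_ (le_trace_mul_barrierHess hA hν.le hℓ hΛ.le)
  unfold barrierTime
  gcongr ?_ / _
  have radial : 0 ≤ 2 * Λ * E * (2 * Λ / ρ ^ 2 * ν⁻¹ * ‖X.1 - y‖ ^ 2) := by positivity
  linarith

theorem barrierTime_le_trace {A : Matrix (Fin n) (Fin n) ℝ} (hA : UniformlyElliptic ν A)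
    (hν : 0 < ν) (hρ : 0 < ρ) (hℓ : 0 < ℓ) (hΛ : ν * (2 + n * ν) ≤ Λ)
    (hκ : Λ * (4 + 2 * n * ν) ≤ κ * (1 - Real.exp (-Λ / 2))) (ht : t₀ ≤ X.2)
    (hpos : 0 ≤ barrier y t₀ ρ Λ κ ℓ X) :
    barrierTime y t₀ ρ Λ κ ℓ X ≤ (A * barrierHess y t₀ ρ Λ κ ℓ X).trace := by
  have hΛ0 : 0 < Λ := lt_of_lt_of_le (by positivity) hΛ
  have hκ0 : 0 ≤ κ := nonneg_of_mul_nonneg_left (le_trans (by positivity) hκ)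
    (sub_pos.2 (Real.exp_lt_one_iff.2 (by linarith)))
  obtain hfar | hnear := le_total (ρ ^ 2 / 2) (‖X.1 - y‖ ^ 2)
  · exact barrierTime_le_trace_of_far hA hν hρ hℓ hκ0 hΛ hpos hfar
  · exact barrierTime_le_trace_of_near hA hν hρ hℓ hΛ0 hκ0 hκ ht hnear

theorem barrier_nonpos (hℓ : 0 < ℓ) (hΛ : 0 ≤ Λ) (hX : barrierHeight y t₀ ρ X ≤ -1) :
    barrier y t₀ ρ Λ κ ℓ X ≤ 0 := by
  rw [barrier_eq_weight_mul]
  refine mul_nonpos_of_nonneg_of_nonpos (barrierWeight_pos hℓ).le (sub_nonpos.2 ?_)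
  exact Real.one_le_exp (by nlinarith)

theorem barrierWeight_le (hρ : 0 < ρ) (hℓ : 0 < ℓ) (hΛ : 0 ≤ Λ) (hκ : 0 ≤ κ)
    (hX : X.2 ∈ Icc t₀ (t₀ + ρ ^ 2)) : barrierWeight y t₀ ρ Λ κ ℓ X ≤ ℓ * Real.exp (4 * Λ) := by
  have height : barrierHeight y t₀ ρ X ≤ 4 := by
    rw [barrierHeight, div_le_iff₀ (by positivity)]
    linarith [hX.2, sq_nonneg ‖X.1 - y‖]
  have elapsed : 0 ≤ (X.2 - t₀) / ρ ^ 2 := div_nonneg (sub_nonneg.2 hX.1) (by positivity)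
  unfold barrierWeight
  gcongr
  nlinarith

theorem norm_barrierGrad_le (hρ : 0 < ρ) (hℓ : 0 < ℓ) (hΛ : 0 ≤ Λ) (hκ : 0 ≤ κ)
    (hX : X ∈ closedCyl y (3 * ρ) t₀ (t₀ + ρ ^ 2)) :
    ‖barrierGrad y t₀ ρ Λ κ ℓ X‖ ≤ 6 * Λ * Real.exp (4 * Λ) * ℓ / ρ := by
  have hE : 0 < barrierWeight y t₀ ρ Λ κ ℓ X := barrierWeight_pos hℓ
  rw [barrierGrad, norm_smul, neg_mul, norm_neg, Real.norm_of_nonneg (by positivity),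
    ← dist_eq_norm]
  calc 2 * Λ / ρ ^ 2 * barrierWeight y t₀ ρ Λ κ ℓ X * dist X.1 y
      ≤ 2 * Λ / ρ ^ 2 * (ℓ * Real.exp (4 * Λ)) * (3 * ρ) := by
        gcongr
        · exact barrierWeight_le hρ hℓ hΛ hκ hX.2
        · exact hX.1
    _ = 6 * Λ * Real.exp (4 * Λ) * ℓ / ρ := by field_simp; ring

theorem barrier_le_of_mem_parabolicBoundary (hρ : 0 < ρ) (hℓ : 0 < ℓ) (hΛ : 0 ≤ Λ)
    (hu : ∀ X ∈ closedCyl y (3 * ρ) t₀ (t₀ + ρ ^ 2), 0 ≤ u X)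
    (hinit : ∀ x ∈ ball y ρ, ℓ ≤ u (x, t₀))
    (hX : X ∈ parabolicBoundary y (3 * ρ) t₀ (t₀ + ρ ^ 2)) :
    barrier y t₀ ρ Λ κ ℓ X ≤ u X := by
  obtain hlow | hhigh := le_or_gt (barrierHeight y t₀ ρ X) (-1)
  · exact (barrier_nonpos hℓ hΛ hlow).trans (hu X hX.1)
  rw [barrierHeight, lt_div_iff₀ (by positivity), ← dist_eq_norm] at hhigh
  have hbottom : X.2 = t₀ := hX.2.resolve_right fun hlat => by
    rw [hlat] at hhigh
    nlinarith [hX.1.2.2]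
  have hball : X.1 ∈ ball y ρ := by
    refine mem_ball.2 (abs_lt_of_sq_lt_sq' ?_ hρ.le).2
    rw [hbottom] at hhigh
    linarith
  have weight_le : barrierWeight y t₀ ρ Λ κ ℓ X ≤ ℓ * 1 := by
    unfold barrierWeight barrierHeight
    gcongr
    rw [hbottom, Real.exp_le_one_iff, sub_self, mul_zero, zero_sub, zero_div, mul_zero, sub_zero,
      neg_div, mul_neg, neg_nonpos]
    positivity
  have : 0 ≤ ℓ * Real.exp (-Λ - κ * ((X.2 - t₀) / ρ ^ 2)) := by positivity
  have := hinit X.1 hball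
  rw [← hbottom] at this
  unfold barrier
  linarith

theorem le_barrier_final (hρ : 0 < ρ) (hℓ : 0 < ℓ) (hΛ : 0 ≤ Λ) {x : En n}
    (hx : x ∈ closedBall y (2 * ρ)) : Real.exp (-κ) * (1 - Real.exp (-Λ)) * ℓ ≤
      barrier y t₀ ρ Λ κ ℓ (x, t₀ + ρ ^ 2) := by
  have height : 0 ≤ barrierHeight y t₀ ρ (x, t₀ + ρ ^ 2) := by
    have : ‖x - y‖ ≤ 2 * ρ := mem_closedBall_iff_norm.1 hx
    refine div_nonneg ?_ (by positivity)
    nlinarith [norm_nonneg (x - y)]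
  have weight_ge : ℓ * Real.exp (-κ) ≤ barrierWeight y t₀ ρ Λ κ ℓ (x, t₀ + ρ ^ 2) := by
    unfold barrierWeight
    gcongr
    rw [add_sub_cancel_left, div_self (by positivity)]
    nlinarith
  calc Real.exp (-κ) * (1 - Real.exp (-Λ)) * ℓ = ℓ * Real.exp (-κ) - ℓ * Real.exp (-Λ - κ * 1) := by
        rw [sub_eq_add_neg (-Λ), Real.exp_add]; ring_nf
    _ ≤ barrier y t₀ ρ Λ κ ℓ (x, t₀ + ρ ^ 2) := by
        rw [barrier, add_sub_cancel_left, div_self (by positivity)]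
        gcongr

end Barrier

section Propagation

variable {y : En n} {R r t₀ m K s ρ ν Λ κ γ ℓ : ℝ} {β : En n → ℝ≥0∞} {u : En n × ℝ → ℝ}

theorem pow_mul_volume_le_of_volume_ball_le (hm : 0 < m) (hK : 0 ≤ K) (hs : 0 ≤ s)
    (hβ : ∫⁻ x, β x ^ n ≤ ENNReal.ofReal s)
    (h : volume (ball (0 : En n) m) ≤
      2 ^ n * ∫⁻ x in ball y R, (ENNReal.ofReal K * β x) ^ n) :
    m ^ n * volume.real (ball (0 : En n) 1) ≤ (2 * K) ^ n * s := by
  have scaled : volume (ball (0 : En n) m) =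
      ENNReal.ofReal (m ^ n * volume.real (ball (0 : En n) 1)) := by
    rw [Measure.addHaar_ball_of_pos _ _ hm, finrank_euclideanSpace_fin,
      ENNReal.ofReal_mul (by positivity), ofReal_measureReal measure_ball_lt_top.ne]
  have integral_le : 2 ^ n * ∫⁻ x in ball y R, (ENNReal.ofReal K * β x) ^ n ≤
      ENNReal.ofReal ((2 * K) ^ n * s) := calc
    2 ^ n * ∫⁻ x in ball y R, (ENNReal.ofReal K * β x) ^ n
      = 2 ^ n * (ENNReal.ofReal K ^ n * ∫⁻ x in ball y R, β x ^ n) := by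
        simp_rw [mul_pow]
        rw [lintegral_const_mul' _ _ (by finiteness)]
    _ ≤ 2 ^ n * (ENNReal.ofReal K ^ n * ENNReal.ofReal s) := by
        gcongr
        exact (setLIntegral_le_lintegral _ _).trans hβ
    _ = ENNReal.ofReal ((2 * K) ^ n * s) := by
        rw [ENNReal.ofReal_mul (by positivity), ENNReal.ofReal_pow (by positivity),
          ENNReal.ofReal_mul zero_le_two, ENNReal.ofReal_ofNat]
        ring
  exact (ENNReal.ofReal_le_ofReal_iff (by positivity)).1 (scaled ▸ h.trans integral_le)

theorem IsPucciSupersolution.le_of_small_drift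
    (hu : IsPucciSupersolution ν β u (closedCyl y (3 * ρ) t₀ (t₀ + ρ ^ 2))) (hν : 0 < ν)
    (hρ : 0 < ρ) (hℓ : 0 < ℓ) (hΛ : ν * (2 + n * ν) ≤ Λ) (hκ0 : 0 ≤ κ)
    (hκ : Λ * (4 + 2 * n * ν) ≤ κ * (1 - Real.exp (-Λ / 2))) (hγ : 0 < γ)
    (hγκ : 2 * γ ≤ Real.exp (-κ) * (1 - Real.exp (-Λ))) (hs : 0 ≤ s)
    (hsmall : (2 * (ν * (6 * Λ * Real.exp (4 * Λ) + γ / 6))) ^ n * s <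
      (γ / 6) ^ n * volume.real (ball (0 : En n) 1))
    (hβ : ∫⁻ x, β x ^ n ≤ ENNReal.ofReal s) (hinit : ∀ x ∈ ball y ρ, ℓ ≤ u (x, t₀))
    {x : En n} (hx : x ∈ closedBall y (2 * ρ)) : γ * ℓ ≤ u (x, t₀ + ρ ^ 2) := by
  have hΛ0 : 0 < Λ := lt_of_lt_of_le (by positivity) hΛ
  by_contra! hlt
  have hZ : (x, t₀ + ρ ^ 2) ∈ closedCyl y (3 * ρ) t₀ (t₀ + ρ ^ 2) :=
    ⟨closedBall_subset_closedBall (by linarith) hx, right_mem_Icc.2 (by linarith [sq_nonneg ρ])⟩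
  have gap : 2 * (3 * ρ) * (ℓ / ρ * (γ / 6)) <
      barrier y t₀ ρ Λ κ ℓ (x, t₀ + ρ ^ 2) - u (x, t₀ + ρ ^ 2) := by
    have final := le_barrier_final (t₀ := t₀) (κ := κ) hρ hℓ hΛ0.le hx
    have : 2 * (3 * ρ) * (ℓ / ρ * (γ / 6)) = γ * ℓ := by field_simp; norm_num
    nlinarith
  have volume_le := hu.volume_ball_le hν hasParabolicDerivs_barrier
    (fun X hX hpos A hA => barrierTime_le_trace hA hν hρ hℓ hΛ hκ hX.2.1 hpos.le)
    (by positivity) (fun X hX => norm_barrierGrad_le hρ hℓ hΛ0.le hκ0 hX)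
    (fun X hX => barrier_le_of_mem_parabolicBoundary hρ hℓ hΛ0.le hu.nonneg hinit hX)
    hZ gap
  have large := pow_mul_volume_le_of_volume_ball_le (by positivity) (by positivity) hs hβ volume_le
  have scale : 2 * (ν * (6 * Λ * Real.exp (4 * Λ) * ℓ / ρ + ℓ / ρ * (γ / 6))) =
      ℓ / ρ * (2 * (ν * (6 * Λ * Real.exp (4 * Λ) + γ / 6))) := by ring
  rw [scale, mul_pow, mul_pow, mul_assoc, mul_assoc] at large
  exact hsmall.not_ge (le_of_mul_le_mul_left large (by positivity))

theorem exists_expansion_step (n : ℕ) {ν : ℝ} (hν : 0 < ν) :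
    ∃ s γ : ℝ, 0 < s ∧ 0 < γ ∧ γ < 1 ∧
      ∀ (β : En n → ℝ≥0∞) (u : En n × ℝ → ℝ) (y : En n) (t₀ ρ ℓ : ℝ), 0 < ρ → 0 < ℓ →
        IsPucciSupersolution ν β u (closedCyl y (3 * ρ) t₀ (t₀ + ρ ^ 2)) →
        ∫⁻ x, β x ^ n ≤ ENNReal.ofReal s → (∀ x ∈ ball y ρ, ℓ ≤ u (x, t₀)) →
        ∀ x ∈ closedBall y (2 * ρ), γ * ℓ ≤ u (x, t₀ + ρ ^ 2) := by
  set Λ : ℝ := ν * (2 + n * ν) with hΛ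
  have hΛ0 : 0 < Λ := by positivity
  have half_pos : 0 < 1 - Real.exp (-Λ / 2) :=
    sub_pos.2 (Real.exp_lt_one_iff.2 (by linarith))
  have one_sub_pos : 0 < 1 - Real.exp (-Λ) := sub_pos.2 (Real.exp_lt_one_iff.2 (by linarith))
  set κ : ℝ := Λ * (4 + 2 * n * ν) / (1 - Real.exp (-Λ / 2))
  have hκ0 : 0 ≤ κ := by positivity
  set γ : ℝ := Real.exp (-κ) * (1 - Real.exp (-Λ)) / 2
  have hγ : 0 < γ := by positivity
  have hγ1 : γ < 1 := by
    have : Real.exp (-κ) * (1 - Real.exp (-Λ)) ≤ 1 :=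
      mul_le_one₀ (Real.exp_le_one_iff.2 (by linarith)) one_sub_pos.le
        (by linarith [Real.exp_pos (-Λ)])
    exact (div_lt_one two_pos).2 (by linarith)
  set ω := volume.real (ball (0 : En n) 1)
  have hω : 0 < ω := ENNReal.toReal_pos (measure_ball_pos _ _ one_pos).ne' measure_ball_lt_top.ne
  set C : ℝ := 2 * (ν * (6 * Λ * Real.exp (4 * Λ) + γ / 6))
  have hC : 0 < C := by positivity
  set s : ℝ := (γ / 6) ^ n * ω / (2 * C ^ n)
  have hs : 0 < s := by positivity
  have hsmall : C ^ n * s < (γ / 6) ^ n * ω := calc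
    C ^ n * s = (γ / 6) ^ n * ω / 2 := by simp only [s]; field_simp
    _ < (γ / 6) ^ n * ω := half_lt_self (by positivity)
  exact ⟨s, γ, hs, hγ, hγ1, fun β u y t₀ ρ ℓ hρ hℓ hu hβ hinit x hx =>
    hu.le_of_small_drift hν hρ hℓ hΛ.ge hκ0 (div_mul_cancel₀ _ half_pos.ne').ge hγ
      (mul_div_cancel₀ _ two_ne_zero).le hs.le hsmall hβ hinit hx⟩

theorem exists_ball_subset_half_ball (hρ : 0 < ρ) (hr : 6 * ρ ≤ r) {x : En n}
    (hx : x ∈ ball 0 (r / 2)) :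
    ∃ y : En n, x ∈ closedBall y (2 * ρ) ∧ ball y ρ ⊆ ball 0 (r / 2) ∧
      closedBall y (3 * ρ) ⊆ ball 0 r := by
  have hr0 : 0 < r := by linarith
  have hx : ‖x‖ < r / 2 := mem_ball_zero_iff.1 hx
  have hc : 0 ≤ 1 - 2 * ρ / r := by
    rw [sub_nonneg, div_le_one hr0]
    linarith
  have norm_le : ‖(1 - 2 * ρ / r) • x‖ ≤ r / 2 - ρ := by
    rw [norm_smul, Real.norm_of_nonneg hc]
    calc (1 - 2 * ρ / r) * ‖x‖ ≤ (1 - 2 * ρ / r) * (r / 2) := by gcongr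
      _ = r / 2 - ρ := by field_simp
  refine ⟨(1 - 2 * ρ / r) • x, ?_, ball_subset_ball' ?_, closedBall_subset_ball' ?_⟩
  · rw [mem_closedBall_iff_norm, sub_smul, one_smul, sub_sub_self, norm_smul,
      Real.norm_of_nonneg (by positivity), div_mul_eq_mul_div, div_le_iff₀ hr0]
    nlinarith
  all_goals rw [dist_zero_right]; linarith

theorem exists_propagation_step (n : ℕ) {ν : ℝ} (hν : 0 < ν) :
    ∃ s γ : ℝ, 0 < s ∧ 0 < γ ∧ γ < 1 ∧
      ∀ (β : En n → ℝ≥0∞) (u : En n × ℝ → ℝ) (r t₀ ρ ℓ : ℝ), 0 < ρ → 6 * ρ ≤ r → 0 < ℓ →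
        IsPucciSupersolution ν β u (ball 0 r ×ˢ Icc t₀ (t₀ + ρ ^ 2)) →
        ∫⁻ x, β x ^ n ≤ ENNReal.ofReal s → (∀ x ∈ ball 0 (r / 2), ℓ ≤ u (x, t₀)) →
        ∀ x ∈ ball 0 (r / 2), γ * ℓ ≤ u (x, t₀ + ρ ^ 2) := by
  obtain ⟨s, γ, hs, hγ, hγ1, step⟩ := exists_expansion_step n hν
  refine ⟨s, γ, hs, hγ, hγ1, fun β u r t₀ ρ ℓ hρ hr hℓ hu hβ hinit x hx => ?_⟩
  obtain ⟨y, hxy, hhalf, hball⟩ := exists_ball_subset_half_ball hρ hr hx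
  exact step β u y t₀ ρ ℓ hρ hℓ (hu.mono (prod_mono_left hball)) hβ
    (fun z hz => hinit z (hhalf hz)) x hxy

theorem exists_pow_mul_le (n : ℕ) {ν : ℝ} (hν : 0 < ν) :
    ∃ s γ : ℝ, 0 < s ∧ 0 < γ ∧ γ < 1 ∧
      ∀ (β : En n → ℝ≥0∞) (u : En n × ℝ → ℝ) (r t₀ ρ ℓ : ℝ) (m : ℕ), 0 < ρ → 6 * ρ ≤ r → 0 < ℓ →
        IsPucciSupersolution ν β u (ball 0 r ×ˢ Icc t₀ (t₀ + m * ρ ^ 2)) →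
        ∫⁻ x, β x ^ n ≤ ENNReal.ofReal s → (∀ x ∈ ball 0 (r / 2), ℓ ≤ u (x, t₀)) →
        ∀ x ∈ ball 0 (r / 2), γ ^ m * ℓ ≤ u (x, t₀ + m * ρ ^ 2) := by
  obtain ⟨s, γ, hs, hγ, hγ1, step⟩ := exists_propagation_step n hν
  refine ⟨s, γ, hs, hγ, hγ1, fun β u r t₀ ρ ℓ m hρ hr hℓ hu hβ hinit => ?_⟩
  induction m with
  | zero => simpa using hinit
  | succ m ih =>
    have time_eq : t₀ + (m + 1 : ℕ) * ρ ^ 2 = t₀ + m * ρ ^ 2 + ρ ^ 2 := by push_cast; ring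
    rw [time_eq] at hu ⊢
    rw [pow_succ', mul_assoc]
    refine step β u r _ ρ _ hρ hr (by positivity) (hu.mono ?_) hβ (ih (hu.mono ?_))
    · exact prod_mono_right (Icc_subset_Icc_left (by linarith [show 0 ≤ m * ρ ^ 2 by positivity]))
    · exact prod_mono_right (Icc_subset_Icc_right (by linarith [sq_nonneg ρ]))

theorem exists_rpow_neg_eq_pow {γ : ℝ} (hγ : 0 < γ) (hγ1 : γ < 1) {m : ℕ} (hm : 0 < m) :
    ∃ k : ℝ, 0 < k ∧ (2 : ℝ) ^ (-k) = γ ^ m := by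
  refine ⟨-Real.logb 2 (γ ^ m), neg_pos.2 ?_, ?_⟩
  · exact Real.logb_neg one_lt_two (pow_pos hγ m) (pow_lt_one₀ hγ.le hγ1 hm.ne')
  · rw [neg_neg, Real.rpow_logb two_pos (by norm_num) (pow_pos hγ m)]

end Propagation

end

/-- **Small-drift propagation of lower bounds** (Lemma 3.1). -/
theorem small_drift_propagation_of_lower_bounds
    (n : ℕ) (hn : 0 < n) (ν : ℝ) (hν : 1 ≤ ν) :
    ∃ s₁ C₁ : ℝ, 0 < s₁ ∧ 0 < C₁ ∧
      ∀ α : ℝ, 0 < α →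
        ∃ k : ℝ, 0 < k ∧
          ∀ (r ℓ : ℝ) (u : En n × ℝ → ℝ)
            (a : En n × ℝ → Matrix (Fin n) (Fin n) ℝ) (b : En n × ℝ → En n)
            (O : Set (En n × ℝ)),
            0 < r → 0 < ℓ →
            IsOpen O →
            closure (box (0 : En n) r (-(r ^ 2)) ((α - 1) * r ^ 2)) ⊆ O →
            IsC21 u O →
            UnifParabolic ν a (box (0 : En n) r (-(r ^ 2)) ((α - 1) * r ^ 2)) →
            LxnLtinfPow b (box (0 : En n) r (-(r ^ 2)) ((α - 1) * r ^ 2)) ≤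
              ENNReal.ofReal s₁ →
            (∀ X ∈ box (0 : En n) r (-(r ^ 2)) ((α - 1) * r ^ 2),
              -Dt u X + Lop a b u X ≤ 0) →
            (∀ X ∈ box (0 : En n) r (-(r ^ 2)) ((α - 1) * r ^ 2), 0 < u X) →
            (∀ x ∈ ball (0 : En n) (r / 2), ℓ ≤ u (x, -(r ^ 2))) →
            ∀ x ∈ ball (0 : En n) (r / 2),
              C₁ * (2 : ℝ) ^ (-k) * ℓ ≤ u (x, (α - 1) * r ^ 2) := by
  have hν0 : 0 < ν := one_pos.trans_le hν
  obtain ⟨s₁, γ, hs₁, hγ, hγ1, propagate⟩ := exists_pow_mul_le n hν0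
  refine ⟨s₁, 1, hs₁, one_pos, fun α hα => ?_⟩
  obtain ⟨m, hm⟩ := exists_nat_ge (36 * α)
  have hm0 : (0 : ℝ) < m := (by positivity : 0 < 36 * α).trans_le hm
  obtain ⟨k, hk, hkγ⟩ := exists_rpow_neg_eq_pow hγ hγ1 (Nat.cast_pos.1 hm0)
  refine ⟨k, hk, fun r ℓ u a b O hr hℓ hO hQO hu ha hb heq hpos hinit => ?_⟩
  have supersolution := isPucciSupersolution_of_supersolution hν0.le
    (by nlinarith [pow_pos hr 2]) hO hQO hu ha heq hpos
  set ρ := r * √(α / m)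
  have hρ_sq : ρ ^ 2 = r ^ 2 * (α / m) := by rw [mul_pow, Real.sq_sqrt (by positivity)]
  have hρ : 6 * ρ ≤ r := by
    refine abs_le_of_sq_le_sq' ?_ hr.le |>.2
    rw [mul_pow, hρ_sq]
    have : α / m ≤ 1 / 36 := by rw [div_le_div_iff₀ hm0 (by norm_num)]; linarith
    nlinarith [pow_pos hr 2]
  have final_time : (α - 1) * r ^ 2 = -(r ^ 2) + m * ρ ^ 2 := by rw [hρ_sq]; field_simp; ring
  rw [one_mul, hkγ, final_time]
  rw [final_time] at supersolution hb
  exact propagate _ u r _ ρ ℓ m (by positivity) hρ hℓ supersolution hb hinit
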